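/- arXiv:2305.19046 — 2 statements merged into one kernel-verified Lean document; each statement's English description precedes it below -/
import Mathlib

section
/- Let 0 < α < n, 1 < s < n/α, p ∈ (1,∞), and f ∈ L^p(cap_{α,s}). Then there is C = C(α,s,n,p) > 0 such that ∫ (M_{cap_{α,s}} f)^p d cap_{α,s} ≤ C ∫ |f|^p d cap_{α,s}. -/
open scoped ENNReal
open Metric Set MeasureTheory

noncomputable section

/-- `ℝⁿ` as Euclidean space. -/
abbrev Rn (n : ℕ) := EuclideanSpace ℝ (Fin n)

/-- The Choquet integral of a nonnegative function `g` with respect to a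
(monotone) set function `C`: `∫ g dC := ∫_0^∞ C({g > t}) dt`. -/
noncomputable def choquet {X : Type*} (C : Set X → ℝ≥0∞) (g : X → ℝ≥0∞) : ℝ≥0∞ :=
  ∫⁻ t in Ioi (0 : ℝ), C {x | ENNReal.ofReal t < g x}

/-- The Choquet integral of `g` restricted to a set `A`. -/
noncomputable def choquetOn {X : Type*} (C : Set X → ℝ≥0∞) (A : Set X) (g : X → ℝ≥0∞) : ℝ≥0∞ :=
  ∫⁻ t in Ioi (0 : ℝ), C {x | x ∈ A ∧ ENNReal.ofReal t < g x}

/-- The `L^∞(C)` norm: `inf {λ > 0 : C({|f| > λ}) = 0}` (formulated in `ℝ≥0∞`). -/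
noncomputable def choquetEssSup {X : Type*} (C : Set X → ℝ≥0∞) (f : X → ℝ) : ℝ≥0∞ :=
  sInf {l : ℝ≥0∞ | C {x | l < ENNReal.ofReal |f x|} = 0}

/-- `C`-quasicontinuity of a function `f`. -/
def QuasiCont {X : Type*} [TopologicalSpace X] (C : Set X → ℝ≥0∞) (f : X → ℝ) : Prop :=
  ∀ ε : ℝ≥0∞, 0 < ε → ∃ U : Set X, IsOpen U ∧ C U < ε ∧ ContinuousOn f Uᶜ

/-- Membership in the capacitary space `L^p(C)`: `C`-quasicontinuous with
finite `p`-th power Choquet integral. -/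
def MemChoquetLp {X : Type*} [TopologicalSpace X] (C : Set X → ℝ≥0∞) (p : ℝ) (f : X → ℝ) : Prop :=
  QuasiCont C f ∧ choquet C (fun x => ENNReal.ofReal |f x| ^ p) < ∞

/-- The constant `γ(α)` in the Riesz kernel `I_α = (1/γ(α)) |x|^{α-n}`. -/
noncomputable def rieszConst (n : ℕ) (α : ℝ) : ℝ :=
  Real.pi ^ ((n : ℝ) / 2) * 2 ^ α * Real.Gamma (α / 2) / Real.Gamma (((n : ℝ) - α) / 2)

/-- The Riesz potential `I_α * φ` of a nonnegative function `φ`. -/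
noncomputable def rieszPot (n : ℕ) (α : ℝ) (φ : Rn n → ℝ≥0∞) (x : Rn n) : ℝ≥0∞ :=
  ∫⁻ y, ENNReal.ofReal ((1 / rieszConst n α) * ‖x - y‖ ^ (α - (n : ℝ))) * φ y

/-- The Riesz capacity `cap_{α,s}(E) = inf {‖φ‖_{L^s}^s : φ ≥ 0, I_α*φ ≥ 1 on E}`. -/
noncomputable def rieszCap (n : ℕ) (α s : ℝ) (E : Set (Rn n)) : ℝ≥0∞ :=
  ⨅ (φ : Rn n → ℝ≥0∞) (_ : ∀ x ∈ E, 1 ≤ rieszPot n α φ x), ∫⁻ y, φ y ^ s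

/-- The capacitary maximal function associated to the Riesz capacity:
`M_{cap_{α,s}} g(x) := sup_{r>0} (1/(cap_{α,s}(B(0,1)) r^{n-αs})) ∫_{B(x,r)} g d cap_{α,s}`. -/
noncomputable def maximalCap (n : ℕ) (α s : ℝ) (g : Rn n → ℝ≥0∞) (x : Rn n) : ℝ≥0∞ :=
  ⨆ (r : ℝ) (_ : 0 < r),
    (rieszCap n α s (ball (0 : Rn n) 1) * ENNReal.ofReal (r ^ ((n : ℝ) - α * s)))⁻¹ *
      choquetOn (rieszCap n α s) (ball x r) g

/-- `Γ_{α,s}(g) := inf {‖φ‖_{L^s}^s : φ ≥ 0, I_α * φ ≥ g everywhere}`. -/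
noncomputable def rieszGammaFunc (n : ℕ) (α s : ℝ) (g : Rn n → ℝ≥0∞) : ℝ≥0∞ :=
  ⨅ (φ : Rn n → ℝ≥0∞) (_ : ∀ x, g x ≤ rieszPot n α φ x), ∫⁻ y, φ y ^ s

/-!
Call `r ↦ ρ r = cap(B(0,1)) r^(n-αs)` the gauge; by scaling it dominates the capacity of every ball
of radius `r`. The capacitary density `cap(B(x,r) ∩ E) / ρ r` satisfies a weak-type bound: if `φ` is
admissible for `E`, then either the potential of the part of `φ` outside `B(x,2r)` reaches `1/2`
somewhere on `B(x,r) ∩ E`, so that the full potential at `x` is bounded below by the Harnack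
inequality for the Riesz kernel, or twice the part of `φ` inside `B(x,2r)` is admissible for
`B(x,r) ∩ E`, so that the measure `φ^s dy` has large density at `x`, a situation controlled by
Vitali covering.

To pass from sets to functions, cut `∫_{B(x,r)} g dcap` at the heights `t 2^i / 2`: if `M g(x) > t`,
then for some `i` the set `{g > t 2^i / 2}` has density more than `τ i` at `x`, for any weights with
`∑ 2^i τ i ≤ 1`. Since `p > 1`, the weights can decay slowly enough for the resulting bounds to be
summable after integration in `t`, which is the interpolation step.
-/

section Lintegral

variable {X : Type*} [MeasurableSpace X] {μ : Measure X}

lemma exists_measurable_le_forall_ae_le {f : X → ℝ≥0∞} (hf : ∫⁻ x, f x ∂μ ≠ ∞) :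
    ∃ g : X → ℝ≥0∞, Measurable g ∧ g ≤ f ∧
      ∀ η : X → ℝ≥0∞, Measurable η → η ≤ f → η ≤ᵐ[μ] g := by
  obtain ⟨g, hg, hgf, hint⟩ := exists_measurable_le_lintegral_eq μ f
  refine ⟨g, hg, hgf, fun η hη hηf => ?_⟩
  have hmax : ∫⁻ x, max (η x) (g x) ∂μ ≤ ∫⁻ x, g x ∂μ :=
    hint ▸ lintegral_mono fun x => max_le (hηf x) (hgf x)
  have heq := ae_eq_of_ae_le_of_lintegral_le (Filter.Eventually.of_forall fun x =>
    le_max_right (η x) (g x)) (hint ▸ hf) (hη.max hg).aemeasurable hmax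
  filter_upwards [heq] with x hx
  exact hx ▸ le_max_left _ _

lemma lintegral_mul_le_of_forall_measurable_ae_le {k φ ψ : X → ℝ≥0∞} (hk : Measurable k)
    (hk_top : ∀ x, k x ≠ ∞)
    (h : ∀ η : X → ℝ≥0∞, Measurable η → η ≤ φ → η ≤ᵐ[μ] ψ) :
    ∫⁻ x, k x * φ x ∂μ ≤ ∫⁻ x, k x * ψ x ∂μ := by
  obtain ⟨g, hg, hgφ, hint⟩ := exists_measurable_le_lintegral_eq μ fun x => k x * φ x
  rw [hint]
  have hdiv : (fun x => g x / k x) ≤ φ := fun x => ENNReal.div_le_of_le_mul' (hgφ x)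
  refine lintegral_mono_ae ?_
  filter_upwards [h _ (hg.div hk) hdiv] with x hx
  rcases eq_or_ne (k x) 0 with h0 | h0
  · simpa [h0] using hgφ x
  · exact (ENNReal.div_le_iff' h0 (hk_top x)).1 hx

/-- The outer integral of an arbitrary function need not be additive, which is why admissible
densities in a capacity have to be replaced by measurable ones. -/
lemma exists_measurable_le_lintegral_mul_le {s : ℝ} (hs : 0 < s) {φ : X → ℝ≥0∞}
    (hφ : ∫⁻ x, φ x ^ s ∂μ ≠ ∞) :
    ∃ ψ : X → ℝ≥0∞, Measurable ψ ∧ ψ ≤ φ ∧ ∀ k : X → ℝ≥0∞, Measurable k → (∀ x, k x ≠ ∞) →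
      ∫⁻ x, k x * φ x ∂μ ≤ ∫⁻ x, k x * ψ x ∂μ := by
  obtain ⟨g, hg, hgφ, hmax⟩ := exists_measurable_le_forall_ae_le hφ
  refine ⟨fun x => g x ^ s⁻¹, hg.pow_const _, fun x => (ENNReal.rpow_inv_le_iff hs).2 (hgφ x),
    fun k hk hk_top => lintegral_mul_le_of_forall_measurable_ae_le hk hk_top fun η hη hηφ => ?_⟩
  filter_upwards [hmax _ (hη.pow_const s) fun x => ENNReal.rpow_le_rpow (hηφ x) hs.le] with x hx
  exact (ENNReal.le_rpow_inv_iff hs).2 hx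

lemma lintegral_const_mul_rpow (μ : Measure X) {s : ℝ} (hs : 0 ≤ s) {c : ℝ≥0∞} (hc : c ≠ ∞)
    (φ : X → ℝ≥0∞) : ∫⁻ y, (c * φ y) ^ s ∂μ = c ^ s * ∫⁻ y, φ y ^ s ∂μ := by
  simp only [ENNReal.mul_rpow_of_nonneg _ _ hs]
  exact lintegral_const_mul' _ _ (ENNReal.rpow_ne_top_of_nonneg hs hc)

lemma lintegral_comp_inv_smul_sub {E : Type*} [NormedAddCommGroup E] [NormedSpace ℝ E]
    [MeasurableSpace E] [BorelSpace E] [FiniteDimensional ℝ E] (μ : Measure E) [μ.IsAddHaarMeasure]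
    (f : E → ℝ≥0∞) (x : E) {r : ℝ} (hr : 0 < r) :
    ∫⁻ y, f (r⁻¹ • (y - x)) ∂μ = ENNReal.ofReal (r ^ Module.finrank ℝ E) * ∫⁻ y, f y ∂μ := by
  have hr' : r⁻¹ ≠ 0 := (inv_pos.2 hr).ne'
  have hmap := lintegral_map_equiv (μ := μ) f (Homeomorph.smulOfNeZero r⁻¹ hr').toMeasurableEquiv
  rw [lintegral_sub_right_eq_self fun y => f (r⁻¹ • y)]
  refine hmap.symm.trans ?_
  change ∫⁻ y, f y ∂(μ.map (r⁻¹ • ·)) = _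
  rw [Measure.map_addHaar_smul μ hr', lintegral_smul_measure, smul_eq_mul, inv_pow, inv_inv,
    abs_of_pos (pow_pos hr _)]

end Lintegral

section Choquet

lemma setLIntegral_Ico_le_of_antitone {G : ℝ → ℝ≥0∞} (hG : Antitone G) (a b : ℝ) :
    ∫⁻ t in Ico a b, G t ≤ ENNReal.ofReal (b - a) * G a := by
  calc ∫⁻ t in Ico a b, G t ≤ ∫⁻ _ in Ico a b, G a :=
        setLIntegral_mono measurable_const fun t ht => hG ht.1
    _ = ENNReal.ofReal (b - a) * G a := by rw [setLIntegral_const, Real.volume_Ico, mul_comm]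

lemma Ioi_zero_subset_Ico_union_iUnion_Ico {a : ℝ} (ha : 0 < a) :
    Ioi (0 : ℝ) ⊆ Ico 0 a ∪ ⋃ i : ℕ, Ico (a * 2 ^ i) (a * 2 ^ (i + 1)) := by
  intro t ht
  rcases lt_or_ge t a with hta | hat
  · exact Or.inl ⟨(mem_Ioi.1 ht).le, hta⟩
  · obtain ⟨i, hi, hi'⟩ := exists_nat_pow_near ((one_le_div ha).2 hat) one_lt_two
    exact Or.inr (mem_iUnion.2 ⟨i, (le_div_iff₀' ha).1 hi, (div_lt_iff₀' ha).1 hi'⟩)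

lemma setLIntegral_Ioi_le_add_tsum_of_antitone {G : ℝ → ℝ≥0∞} (hG : Antitone G) {a : ℝ}
    (ha : 0 < a) :
    ∫⁻ t in Ioi (0 : ℝ), G t ≤
      ENNReal.ofReal a * G 0 + ∑' i : ℕ, ENNReal.ofReal (a * 2 ^ i) * G (a * 2 ^ i) := by
  refine (lintegral_mono_set (Ioi_zero_subset_Ico_union_iUnion_Ico ha)).trans <|
    (lintegral_union_le _ _ _).trans (add_le_add ?_ ?_)
  · simpa only [sub_zero] using setLIntegral_Ico_le_of_antitone hG 0 a
  · refine (lintegral_iUnion_le _ _).trans (ENNReal.tsum_le_tsum fun i =>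
      (setLIntegral_Ico_le_of_antitone hG _ _).trans_eq ?_)
    congr 2
    ring

variable {X : Type*}

lemma choquetOn_le_add_tsum (C : OuterMeasure X) (A : Set X) (g : X → ℝ≥0∞) {a : ℝ} (ha : 0 < a) :
    choquetOn C A g ≤ ENNReal.ofReal a * C A +
      ∑' i : ℕ, ENNReal.ofReal (a * 2 ^ i) * C (A ∩ {x | ENNReal.ofReal (a * 2 ^ i) < g x}) := by
  have hanti : Antitone fun t : ℝ => C (A ∩ {x | ENNReal.ofReal t < g x}) := fun _ _ hab =>
    measure_mono fun _ hx => ⟨hx.1, (ENNReal.ofReal_le_ofReal hab).trans_lt hx.2⟩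
  refine (setLIntegral_Ioi_le_add_tsum_of_antitone hanti ha).trans ?_
  gcongr
  exact inter_subset_left

lemma choquet_const_mul (C : Set X → ℝ≥0∞) {c : ℝ≥0∞} (hc0 : c ≠ 0) (hc : c ≠ ∞)
    (g : X → ℝ≥0∞) : choquet C (fun x => c * g x) = c * choquet C g := by
  have hpos : 0 < c.toReal := ENNReal.toReal_pos hc0 hc
  have hlevel : ∀ t : ℝ, {x | ENNReal.ofReal t < c * g x} =
      {x | ENNReal.ofReal (c.toReal⁻¹ • (t - 0)) < g x} := by
    intro t
    ext x
    change ENNReal.ofReal t < c * g x ↔ ENNReal.ofReal (c.toReal⁻¹ * (t - 0)) < g x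
    rw [sub_zero, ENNReal.ofReal_mul (inv_pos.2 hpos).le, ENNReal.ofReal_inv_of_pos hpos,
      ENNReal.ofReal_toReal hc, mul_comm c⁻¹, ← div_eq_mul_inv,
      ENNReal.div_lt_iff (Or.inl hc0) (Or.inl hc), mul_comm c]
  have hscale := lintegral_comp_inv_smul_sub volume
    ((Ioi (0 : ℝ)).indicator fun t => C {x | ENNReal.ofReal t < g x}) 0 hpos
  rw [Module.finrank_self, pow_one, ENNReal.ofReal_toReal hc,
    lintegral_indicator measurableSet_Ioi] at hscale
  rw [choquet, choquet, ← hscale, ← lintegral_indicator measurableSet_Ioi]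
  refine lintegral_congr fun t => ?_
  simp only [indicator_apply, mem_Ioi, hlevel, sub_zero, smul_eq_mul, mul_pos_iff_of_pos_left,
    inv_pos.2 hpos]

lemma ofReal_lt_rpow_iff {p : ℝ} (hp : 0 < p) {t : ℝ} (ht : 0 ≤ t) {y : ℝ≥0∞} :
    ENNReal.ofReal t < y ^ p ↔ ENNReal.ofReal (t ^ p⁻¹) < y := by
  rw [← ENNReal.rpow_inv_lt_iff hp, ENNReal.ofReal_rpow_of_nonneg ht (inv_pos.2 hp).le]

lemma choquet_rpow_le_of_superlevel_le (C : OuterMeasure X) {p : ℝ} (hp : 0 < p) {ι : Type*}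
    [Countable ι] {w b : ι → ℝ≥0∞} (hb0 : ∀ i, b i ≠ 0) (hb : ∀ i, b i ≠ ∞) {f g : X → ℝ≥0∞}
    (hfg : ∀ t : ℝ, 0 < t → C {x | ENNReal.ofReal t < f x} ≤
      ∑' i, w i * C {x | ENNReal.ofReal t < b i * g x}) :
    choquet C (fun x => f x ^ p) ≤ (∑' i, w i * b i ^ p) * choquet C (fun x => g x ^ p) := by
  have hmeas : ∀ i, Measurable fun t : ℝ => C {x | ENNReal.ofReal t < (b i * g x) ^ p} := fun i =>
    Antitone.measurable fun _ _ hab =>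
      measure_mono fun _ hx => (ENNReal.ofReal_le_ofReal hab).trans_lt hx
  calc choquet C (fun x => f x ^ p)
      ≤ ∫⁻ t in Ioi (0 : ℝ), ∑' i, w i * C {x | ENNReal.ofReal t < (b i * g x) ^ p} := by
        refine setLIntegral_mono (.tsum fun i => (hmeas i).const_mul _) fun t ht => ?_
        simp only [ofReal_lt_rpow_iff hp (mem_Ioi.1 ht).le]
        exact hfg _ (Real.rpow_pos_of_pos ht _)
    _ = ∑' i, w i * choquet C (fun x => (b i * g x) ^ p) := by
        rw [lintegral_tsum fun i => ((hmeas i).const_mul _).aemeasurable]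
        exact tsum_congr fun i => lintegral_const_mul _ (hmeas i)
    _ = (∑' i, w i * b i ^ p) * choquet C (fun x => g x ^ p) := by
        rw [← ENNReal.tsum_mul_right]
        refine tsum_congr fun i => ?_
        simp only [ENNReal.mul_rpow_of_nonneg _ _ hp.le]
        rw [choquet_const_mul C (by simp [hp, hb0, hp.not_gt])
          (ENNReal.rpow_ne_top_of_nonneg hp.le (hb i)), mul_assoc]

end Choquet

section Maximal

variable {X : Type*} [PseudoMetricSpace X]

/-- The maximal function of Choquet averages `(1 / ρ r) ∫_{B(x,r)} g dC` over balls. The gauge `ρ`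
replaces the capacity of the ball, as in the definition of `maximalCap`. -/
def choquetMaximal (C : Set X → ℝ≥0∞) (ρ : ℝ → ℝ≥0∞) (g : X → ℝ≥0∞) (x : X) : ℝ≥0∞ :=
  ⨆ (r : ℝ) (_ : 0 < r), (ρ r)⁻¹ * choquetOn C (ball x r) g

/-- The points at which `E` has `C`-density larger than `τ`, relative to the gauge `ρ`, at some
scale. The quotient is cleared so that gauges with values `0` or `∞` need no convention. -/
def highDensitySet (C : Set X → ℝ≥0∞) (ρ : ℝ → ℝ≥0∞) (E : Set X) (τ : ℝ≥0∞) : Set X :=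
  {x | ∃ r : ℝ, 0 < r ∧ τ * ρ r < C (ball x r ∩ E)}

lemma highDensitySet_eq_empty_of_le_mul (C : OuterMeasure X) {ρ : ℝ → ℝ≥0∞} {τ : ℝ≥0∞}
    (hball : ∀ x r, 0 < r → C (ball x r) ≤ τ * ρ r) (E : Set X) :
    highDensitySet C ρ E τ = ∅ :=
  eq_empty_of_forall_notMem fun x ⟨r, hr, hx⟩ =>
    hx.not_ge ((measure_mono inter_subset_left).trans (hball x r hr))

lemma choquetMaximal_superlevel_subset (C : OuterMeasure X) {ρ : ℝ → ℝ≥0∞}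
    (hball : ∀ x r, 0 < r → C (ball x r) ≤ ρ r) {τ : ℕ → ℝ≥0∞} (hτ : ∑' i, 2 ^ i * τ i ≤ 1)
    (g : X → ℝ≥0∞) {t : ℝ} (ht : 0 < t) :
    {x | ENNReal.ofReal t < choquetMaximal C ρ g x} ⊆
      ⋃ i, highDensitySet C ρ {x | ENNReal.ofReal (t / 2 * 2 ^ i) < g x} (τ i) := by
  intro x hx
  by_contra hlow
  simp only [highDensitySet, mem_iUnion, mem_ofPred_eq, not_exists, not_and, not_lt] at hlow
  refine not_lt.2 (iSup₂_le fun r hr => ?_) (mem_ofPred_eq ▸ hx)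
  rw [mul_comm, ← div_eq_mul_inv]
  refine ENNReal.div_le_of_le_mul ?_
  have hheight : ∀ i : ℕ, ENNReal.ofReal (t / 2 * 2 ^ i) = ENNReal.ofReal (t / 2) * 2 ^ i :=
    fun i => by rw [ENNReal.ofReal_mul (by positivity), ENNReal.ofReal_pow (by norm_num),
      ENNReal.ofReal_ofNat]
  calc choquetOn C (ball x r) g
      ≤ ENNReal.ofReal (t / 2) * ρ r +
          ∑' i : ℕ, ENNReal.ofReal (t / 2 * 2 ^ i) * (τ i * ρ r) := by
        refine (choquetOn_le_add_tsum C _ g (half_pos ht)).trans ?_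
        gcongr with i
        · exact hball x r hr
        · exact hlow i r hr
    _ = ENNReal.ofReal (t / 2) * ρ r * (1 + ∑' i, 2 ^ i * τ i) := by
        rw [mul_add, mul_one, ← ENNReal.tsum_mul_left]
        congr 2 with i
        rw [hheight]
        ring
    _ ≤ ENNReal.ofReal (t / 2) * ρ r * 2 := by grw [hτ, one_add_one_eq_two]
    _ = ENNReal.ofReal t * ρ r := by
        rw [mul_right_comm, ← ENNReal.ofReal_ofNat 2, ← ENNReal.ofReal_mul (by positivity),
          div_mul_cancel₀ _ two_ne_zero]

lemma choquetMaximal_superlevel_le (C : OuterMeasure X) {ρ : ℝ → ℝ≥0∞} {K : ℝ≥0∞}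
    (hball : ∀ x r, 0 < r → C (ball x r) ≤ ρ r)
    (hdens : ∀ E τ, τ ≠ 0 → C (highDensitySet C ρ E τ) ≤ K * τ⁻¹ * C E)
    {τ : ℕ → ℝ≥0∞} (hτ0 : ∀ i, τ i ≠ 0) (hτ : ∑' i, 2 ^ i * τ i ≤ 1)
    (g : X → ℝ≥0∞) {t : ℝ} (ht : 0 < t) :
    C {x | ENNReal.ofReal t < choquetMaximal C ρ g x} ≤
      ∑' i, K * (τ i)⁻¹ * C {x | ENNReal.ofReal t < 2 * 2⁻¹ ^ i * g x} := by
  have hlevel : ∀ (i : ℕ) (y : ℝ≥0∞),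
      ENNReal.ofReal (t / 2 * 2 ^ i) < y ↔ ENNReal.ofReal t < 2 * 2⁻¹ ^ i * y := by
    intro i y
    have hdiv : ENNReal.ofReal (t / 2 * 2 ^ i) = ENNReal.ofReal t / (2 * 2⁻¹ ^ i) := by
      rw [ENNReal.ofReal_mul (by positivity), ENNReal.ofReal_div_of_pos two_pos,
        ENNReal.ofReal_pow (by norm_num), ENNReal.ofReal_ofNat, div_eq_mul_inv, div_eq_mul_inv,
        ENNReal.mul_inv (by simp) (by simp), ENNReal.inv_pow, inv_inv, mul_assoc]
    rw [hdiv, ENNReal.div_lt_iff (Or.inl (by simp)) (Or.inl (by finiteness)), mul_comm y]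
  calc C {x | ENNReal.ofReal t < choquetMaximal C ρ g x}
      ≤ ∑' i, C (highDensitySet C ρ {x | ENNReal.ofReal (t / 2 * 2 ^ i) < g x} (τ i)) :=
        (measure_mono (choquetMaximal_superlevel_subset C hball hτ g ht)).trans
          (measure_iUnion_le _)
    _ ≤ ∑' i, K * (τ i)⁻¹ * C {x | ENNReal.ofReal t < 2 * 2⁻¹ ^ i * g x} := by
        simp only [← hlevel]
        exact ENNReal.tsum_le_tsum fun i => hdens _ _ (hτ0 i)

lemma exists_weights_tsum_ne_top {p : ℝ} (hp : 1 < p) :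
    ∃ τ : ℕ → ℝ≥0∞, (∀ i, τ i ≠ 0) ∧ ∑' i, 2 ^ i * τ i ≤ 1 ∧
      ∑' i, (τ i)⁻¹ * (2 * 2⁻¹ ^ i) ^ p ≠ ∞ := by
  have hp0 : 0 ≤ p := (zero_lt_one.trans hp).le
  -- With `τ i` proportional to `(θ / 2) ^ i`, this `θ` is the common ratio of both series.
  set θ : ℝ≥0∞ := 2 ^ ((1 - p) / 2) with hθ
  have hθ0 : θ ≠ 0 := by simp [hθ]
  have hθ1 : θ < 1 := ENNReal.rpow_lt_one_of_one_lt_of_neg (by norm_num) (by linarith)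
  have hκ0 : 1 - θ ≠ 0 := (tsub_pos_of_lt hθ1).ne'
  have hκ : 1 - θ ≠ ∞ := by simp
  have hratio : (θ * 2⁻¹)⁻¹ * 2⁻¹ ^ p = θ := by
    rw [hθ, ← ENNReal.rpow_neg_one 2, ← ENNReal.rpow_add _ _ (by simp) (by simp),
      ← ENNReal.rpow_neg, ← ENNReal.rpow_mul, ← ENNReal.rpow_add _ _ (by simp) (by simp)]
    congr 1
    ring
  have hpow : ∀ i : ℕ, ((2⁻¹ : ℝ≥0∞) ^ i) ^ p = (2⁻¹ ^ p) ^ i := fun i => by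
    rw [← ENNReal.rpow_natCast, ← ENNReal.rpow_natCast, ← ENNReal.rpow_mul, ← ENNReal.rpow_mul,
      mul_comm]
  refine ⟨fun i => (1 - θ) * (θ * 2⁻¹) ^ i,
    fun i => mul_ne_zero hκ0 (pow_ne_zero _ (by simp [hθ0])), ?_, ?_⟩
  · have hterm : ∀ i, 2 ^ i * ((1 - θ) * (θ * 2⁻¹) ^ i) = (1 - θ) * θ ^ i := fun i => by
      rw [mul_left_comm, ← mul_pow, mul_left_comm, ENNReal.mul_inv_cancel (by simp) (by simp),
        mul_one]
    rw [tsum_congr hterm, ENNReal.tsum_mul_left, ENNReal.tsum_geometric]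
    exact ENNReal.mul_inv_le_one _
  · have hterm : ∀ i, ((1 - θ) * (θ * 2⁻¹) ^ i)⁻¹ * (2 * 2⁻¹ ^ i) ^ p =
        (1 - θ)⁻¹ * 2 ^ p * θ ^ i := fun i => by
      rw [ENNReal.mul_inv (Or.inl hκ0) (Or.inl hκ), ENNReal.inv_pow,
        ENNReal.mul_rpow_of_nonneg _ _ hp0, hpow, mul_mul_mul_comm, ← mul_pow, hratio]
    rw [tsum_congr hterm, ENNReal.tsum_mul_left, ENNReal.tsum_geometric]
    have hκ_inv : (1 - θ)⁻¹ ≠ ∞ := ENNReal.inv_ne_top.2 hκ0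
    finiteness

theorem exists_choquet_choquetMaximal_rpow_le (C : OuterMeasure X) {ρ : ℝ → ℝ≥0∞} {K : ℝ≥0∞}
    (hK : K ≠ ∞) (hball : ∀ x r, 0 < r → C (ball x r) ≤ ρ r)
    (hdens : ∀ E τ, τ ≠ 0 → C (highDensitySet C ρ E τ) ≤ K * τ⁻¹ * C E) {p : ℝ} (hp : 1 < p) :
    ∃ Q : ℝ≥0∞, Q ≠ ∞ ∧ ∀ g : X → ℝ≥0∞,
      choquet C (fun x => choquetMaximal C ρ g x ^ p) ≤ Q * choquet C (fun x => g x ^ p) := by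
  obtain ⟨τ, hτ0, hτ, hsum⟩ := exists_weights_tsum_ne_top hp
  refine ⟨∑' i, K * (τ i)⁻¹ * (2 * 2⁻¹ ^ i) ^ p, ?_, fun g => ?_⟩
  · simp only [mul_assoc K, ENNReal.tsum_mul_left]
    exact ENNReal.mul_ne_top hK hsum
  · exact choquet_rpow_le_of_superlevel_le C (zero_lt_one.trans hp) (by simp) (by finiteness)
      fun t ht => choquetMaximal_superlevel_le C hball hdens hτ0 hτ g ht

lemma exists_countable_pairwiseDisjoint_ball_subset_iUnion [TopologicalSpace.SeparableSpace X]
    {S : Set X} {r : X → ℝ} (hr : ∀ x ∈ S, 0 < r x) {R : ℝ} (hR : ∀ x ∈ S, r x ≤ R) :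
    ∃ u ⊆ S, u.Countable ∧ u.PairwiseDisjoint (fun x => ball x (r x)) ∧
      S ⊆ ⋃ x ∈ u, ball x (6 * r x) := by
  obtain ⟨u, huS, hdisj, hcov⟩ :=
    Vitali.exists_disjoint_subfamily_covering_enlargement_closedBall S id r R hR 5 (by norm_num)
  have hball : u.PairwiseDisjoint fun x => ball x (r x) :=
    hdisj.mono_on fun _ _ => ball_subset_closedBall
  refine ⟨u, huS, hball.countable_of_isOpen (fun _ _ => isOpen_ball)
    fun x hx => nonempty_ball.2 (hr x (huS hx)), hball, fun x hx => ?_⟩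
  obtain ⟨y, hy, hxy⟩ := hcov x hx
  have hmem : x ∈ closedBall y (5 * r y) := hxy (mem_closedBall_self (hr x hx).le)
  exact mem_iUnion₂.2 ⟨y, hy, closedBall_subset_ball (by linarith [hr y (huS hy)]) hmem⟩

lemma outerMeasure_highDensitySet_le [TopologicalSpace.SeparableSpace X] [MeasurableSpace X]
    [OpensMeasurableSpace X] (C : OuterMeasure X) {ρ : ℝ → ℝ≥0∞} {D : ℝ≥0∞}
    (hball : ∀ x r, 0 < r → C (ball x r) ≤ ρ r) (hD : ∀ r, 0 < r → ρ (6 * r) ≤ D * ρ r)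
    (hρ : Filter.Tendsto ρ Filter.atTop (nhds ∞)) (ν : Measure X) {E : Set X}
    (hE : MeasurableSet E) (hνE : ν E ≠ ∞) {σ : ℝ≥0∞} (hσ : σ ≠ 0) :
    C (highDensitySet ν ρ E σ) ≤ D * σ⁻¹ * ν E := by
  set S := highDensitySet ν ρ E σ
  have hS : ∀ x ∈ S, ∃ r : ℝ, 0 < r ∧ σ * ρ r < ν (ball x r ∩ E) := fun x hx => hx
  choose! r hr using hS
  have hρr : ∀ x ∈ S, ρ (r x) ≤ σ⁻¹ * ν (ball x (r x) ∩ E) := fun x hx => by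
    rw [mul_comm, ← div_eq_mul_inv, ENNReal.le_div_iff_mul_le (Or.inl hσ)
      (Or.inr (measure_ne_top_of_subset inter_subset_right hνE)), mul_comm]
    exact (hr x hx).2.le
  obtain ⟨R, hR⟩ : ∃ R, ∀ a, R ≤ a → σ⁻¹ * ν E < ρ a :=
    Filter.eventually_atTop.1 (hρ.eventually_const_lt
      (ENNReal.mul_lt_top (ENNReal.inv_lt_top.2 hσ.bot_lt) hνE.lt_top))
  have hbdd : ∀ x ∈ S, r x ≤ R := by
    intro x hx
    by_contra! hlt
    refine (hR _ hlt.le).not_ge ((hρr x hx).trans ?_)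
    gcongr
    exact inter_subset_right
  obtain ⟨u, huS, hu, hdisj, hcov⟩ :=
    exists_countable_pairwiseDisjoint_ball_subset_iUnion (fun x hx => (hr x hx).1) hbdd
  have := hu.to_subtype
  calc C S ≤ ∑' x : u, C (ball (x : X) (6 * r x)) :=
        (measure_mono hcov).trans (measure_biUnion_le C hu _)
    _ ≤ ∑' x : u, D * σ⁻¹ * ν (ball (x : X) (r x) ∩ E) := by
        refine ENNReal.tsum_le_tsum fun x => ?_
        have hx := (hr x (huS x.2)).1
        calc C (ball (x : X) (6 * r x)) ≤ D * ρ (r x) :=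
              (hball _ _ (by positivity)).trans (hD _ hx)
          _ ≤ D * σ⁻¹ * ν (ball (x : X) (r x) ∩ E) := by
              rw [mul_assoc]
              gcongr
              exact hρr x (huS x.2)
    _ = D * σ⁻¹ * ν (⋃ x ∈ u, ball x (r x) ∩ E) := by
        rw [ENNReal.tsum_mul_left, measure_biUnion hu
          (hdisj.mono fun _ => inter_subset_left) fun _ _ => measurableSet_ball.inter hE]
    _ ≤ D * σ⁻¹ * ν E := by
        gcongr
        exact iUnion₂_subset fun _ _ => inter_subset_right

end Maximal

section Riesz

variable {n : ℕ} {α s : ℝ}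

/-- The Riesz kernel `I_α(x - y)`, the integral kernel of `rieszPot`. -/
def rieszKernel (n : ℕ) (α : ℝ) (x y : Rn n) : ℝ≥0∞ :=
  ENNReal.ofReal ((1 / rieszConst n α) * ‖x - y‖ ^ (α - (n : ℝ)))

lemma rieszPot_eq_lintegral_rieszKernel (φ : Rn n → ℝ≥0∞) (x : Rn n) :
    rieszPot n α φ x = ∫⁻ y, rieszKernel n α x y * φ y := rfl

lemma rieszKernel_ne_top (x y : Rn n) : rieszKernel n α x y ≠ ∞ := ENNReal.ofReal_ne_top

lemma measurable_rieszKernel (x : Rn n) : Measurable (rieszKernel n α x) := by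
  unfold rieszKernel
  fun_prop

lemma ofReal_rpow_mul_rieszKernel {c : ℝ} (hc : 0 ≤ c) (x y : Rn n) :
    ENNReal.ofReal (c ^ (α - (n : ℝ))) * rieszKernel n α x y =
      ENNReal.ofReal ((1 / rieszConst n α) * (c * ‖x - y‖) ^ (α - (n : ℝ))) := by
  rw [rieszKernel, Real.mul_rpow hc (norm_nonneg _), mul_left_comm,
    ENNReal.ofReal_mul (Real.rpow_nonneg hc _)]

lemma ofReal_rpow_mul_rieszKernel_homothety {r : ℝ} (hr : 0 < r) (x y z : Rn n) :
    ENNReal.ofReal (r ^ (α - (n : ℝ))) * rieszKernel n α (r⁻¹ • (z - x)) (r⁻¹ • (y - x)) =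
      rieszKernel n α z y := by
  rw [ofReal_rpow_mul_rieszKernel hr.le, ← smul_sub, sub_sub_sub_cancel_right, norm_smul,
    Real.norm_of_nonneg (inv_pos.2 hr).le, mul_inv_cancel_left₀ hr.ne', rieszKernel]

lemma ofReal_two_rpow_mul_rieszKernel_le (hαn : α ≤ n) {x y z : Rn n} (hxy : x ≠ y)
    (h : dist x y ≤ 2 * dist z y) :
    ENNReal.ofReal (2 ^ (α - (n : ℝ))) * rieszKernel n α z y ≤ rieszKernel n α x y := by
  rw [ofReal_rpow_mul_rieszKernel zero_le_two, rieszKernel, ENNReal.ofReal_mul' (by positivity),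
    ENNReal.ofReal_mul' (by positivity), ← dist_eq_norm, ← dist_eq_norm]
  exact mul_le_mul_right (ENNReal.ofReal_le_ofReal
    (Real.rpow_le_rpow_of_nonpos (dist_pos.2 hxy) h (sub_nonpos.2 hαn))) _

lemma rieszPot_mono {φ ψ : Rn n → ℝ≥0∞} (h : φ ≤ ψ) (x : Rn n) :
    rieszPot n α φ x ≤ rieszPot n α ψ x :=
  lintegral_mono fun y => by gcongr; exact h y

lemma rieszPot_const_mul {c : ℝ≥0∞} (hc : c ≠ ∞) (φ : Rn n → ℝ≥0∞) (x : Rn n) :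
    rieszPot n α (fun y => c * φ y) x = c * rieszPot n α φ x := by
  simp only [rieszPot, mul_left_comm _ c]
  exact lintegral_const_mul' _ _ hc

lemma rieszPot_comp_homothety {r : ℝ} (hr : 0 < r) (φ : Rn n → ℝ≥0∞) (x z : Rn n) :
    rieszPot n α (fun y => φ (r⁻¹ • (y - x))) z =
      ENNReal.ofReal (r ^ α) * rieszPot n α φ (r⁻¹ • (z - x)) := by
  simp only [rieszPot_eq_lintegral_rieszKernel]
  calc ∫⁻ y, rieszKernel n α z y * φ (r⁻¹ • (y - x))
      = ENNReal.ofReal (r ^ (α - (n : ℝ))) *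
          ∫⁻ y, rieszKernel n α (r⁻¹ • (z - x)) (r⁻¹ • (y - x)) * φ (r⁻¹ • (y - x)) := by
        rw [← lintegral_const_mul' _ _ ENNReal.ofReal_ne_top]
        simp only [← mul_assoc, ofReal_rpow_mul_rieszKernel_homothety hr]
    _ = ENNReal.ofReal (r ^ α) * ∫⁻ y, rieszKernel n α (r⁻¹ • (z - x)) y * φ y := by
        rw [lintegral_comp_inv_smul_sub volume
          (fun y => rieszKernel n α (r⁻¹ • (z - x)) y * φ y) x hr, finrank_euclideanSpace_fin,
          ← mul_assoc, ← ENNReal.ofReal_mul (by positivity), ← Real.rpow_natCast,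
          ← Real.rpow_add hr, sub_add_cancel]

lemma rieszPot_near_add_far (φ : Rn n → ℝ≥0∞) {B : Set (Rn n)} (hB : MeasurableSet B)
    (z : Rn n) :
    rieszPot n α (B.indicator φ) z + rieszPot n α (Bᶜ.indicator φ) z = rieszPot n α φ z := by
  simp only [rieszPot_eq_lintegral_rieszKernel, ← indicator_mul_right]
  rw [lintegral_indicator hB, lintegral_indicator hB.compl, lintegral_add_compl _ hB]

lemma ofReal_two_rpow_mul_rieszPot_far_le (hαn : α ≤ n) (φ : Rn n → ℝ≥0∞) {x z : Rn n} {r : ℝ}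
    (hz : z ∈ ball x r) :
    ENNReal.ofReal (2 ^ (α - (n : ℝ))) * rieszPot n α ((ball x (2 * r))ᶜ.indicator φ) z ≤
      rieszPot n α φ x := by
  simp only [rieszPot_eq_lintegral_rieszKernel]
  rw [← lintegral_const_mul' _ _ ENNReal.ofReal_ne_top]
  refine lintegral_mono fun y => ?_
  by_cases hy : y ∈ ball x (2 * r)
  · simp [hy]
  · rw [indicator_of_mem (mem_compl hy), ← mul_assoc]
    have hr : 0 < r := pos_of_mem_ball hz
    have hxy : 2 * r ≤ dist x y := by simpa only [mem_ball', not_lt] using hy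
    have htri : dist x y ≤ dist x z + dist z y := dist_triangle x z y
    gcongr
    exact ofReal_two_rpow_mul_rieszKernel_le hαn (dist_pos.1 (by linarith))
      (by linarith [mem_ball'.1 hz])

lemma rieszCap_le_lintegral {E : Set (Rn n)} {φ : Rn n → ℝ≥0∞}
    (hφ : ∀ x ∈ E, 1 ≤ rieszPot n α φ x) : rieszCap n α s E ≤ ∫⁻ y, φ y ^ s :=
  iInf₂_le φ hφ

lemma le_mul_rieszCap {E : Set (Rn n)} {b c : ℝ≥0∞} (hc0 : c ≠ 0) (hc : c ≠ ∞)
    (h : ∀ φ : Rn n → ℝ≥0∞, (∀ x ∈ E, 1 ≤ rieszPot n α φ x) → ∫⁻ y, φ y ^ s ≠ ∞ →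
      b ≤ c * ∫⁻ y, φ y ^ s) :
    b ≤ c * rieszCap n α s E := by
  simp only [rieszCap, ENNReal.mul_iInf_of_ne hc0 hc, le_iInf_iff]
  intro φ hφ
  rcases eq_or_ne (∫⁻ y, φ y ^ s) ∞ with htop | htop
  · simp [htop, ENNReal.mul_top hc0]
  · exact h φ hφ htop

lemma rieszCap_mono {E F : Set (Rn n)} (h : E ⊆ F) : rieszCap n α s E ≤ rieszCap n α s F :=
  le_iInf₂ fun _ hφ => rieszCap_le_lintegral fun x hx => hφ x (h hx)

lemma rieszCap_superlevel_rieszPot_le (hs : 0 ≤ s) {c : ℝ≥0∞} (hc0 : c ≠ 0) (hc : c ≠ ∞)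
    (φ : Rn n → ℝ≥0∞) :
    rieszCap n α s {x | c ≤ rieszPot n α φ x} ≤ c⁻¹ ^ s * ∫⁻ y, φ y ^ s := by
  have hc' : c⁻¹ ≠ ∞ := ENNReal.inv_ne_top.2 hc0
  rw [← lintegral_const_mul_rpow volume hs hc']
  refine rieszCap_le_lintegral fun x hx => ?_
  rw [rieszPot_const_mul hc', ← ENNReal.inv_mul_cancel hc0 hc]
  gcongr
  exact hx

lemma exists_measurable_lintegral_rpow_lt_of_rieszCap_lt (hs : 0 < s) {E : Set (Rn n)} {b : ℝ≥0∞}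
    (h : rieszCap n α s E < b) :
    ∃ ψ : Rn n → ℝ≥0∞, Measurable ψ ∧ (∀ x ∈ E, 1 ≤ rieszPot n α ψ x) ∧ ∫⁻ y, ψ y ^ s < b := by
  simp only [rieszCap, iInf_lt_iff] at h
  obtain ⟨φ, hφ, hlt⟩ := h
  obtain ⟨ψ, hψ, hψφ, hpot⟩ := exists_measurable_le_lintegral_mul_le hs hlt.ne_top
  refine ⟨ψ, hψ, fun x hx => (hφ x hx).trans
    (hpot _ (measurable_rieszKernel x) (rieszKernel_ne_top x)), hlt.trans_le' ?_⟩
  gcongr with y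
  exact hψφ y

lemma rieszCap_iUnion_le_tsum_lintegral (hs : 0 < s) {ι : Type*} [Countable ι]
    {E : ι → Set (Rn n)} {ψ : ι → Rn n → ℝ≥0∞} (hψ : ∀ i, Measurable (ψ i))
    (hE : ∀ i, ∀ x ∈ E i, 1 ≤ rieszPot n α (ψ i) x) :
    rieszCap n α s (⋃ i, E i) ≤ ∑' i, ∫⁻ y, ψ i y ^ s := by
  have hsup : ∀ y, (⨆ i, ψ i y) ^ s ≤ ∑' i, ψ i y ^ s := fun y =>
    (ENNReal.le_rpow_inv_iff hs).1 <| iSup_le fun i =>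
      (ENNReal.le_rpow_inv_iff hs).2 (ENNReal.le_tsum (f := fun i => ψ i y ^ s) i)
  calc rieszCap n α s (⋃ i, E i) ≤ ∫⁻ y, (⨆ i, ψ i y) ^ s := by
        refine rieszCap_le_lintegral fun x hx => ?_
        obtain ⟨i, hi⟩ := mem_iUnion.1 hx
        exact (hE i x hi).trans (rieszPot_mono (fun y => le_iSup (fun j => ψ j y) i) x)
    _ ≤ ∫⁻ y, ∑' i, ψ i y ^ s := lintegral_mono hsup
    _ = ∑' i, ∫⁻ y, ψ i y ^ s := lintegral_tsum fun i => ((hψ i).pow_const s).aemeasurable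

lemma rieszCap_iUnion_le (hs : 0 < s) {ι : Type*} [Countable ι] (E : ι → Set (Rn n)) :
    rieszCap n α s (⋃ i, E i) ≤ ∑' i, rieszCap n α s (E i) := by
  rcases eq_or_ne (∑' i, rieszCap n α s (E i)) ∞ with htop | htop
  · exact htop ▸ le_top
  refine ENNReal.le_of_forall_pos_le_add fun ε hε _ => ?_
  obtain ⟨δ, hδ, hsum⟩ := ENNReal.exists_pos_sum_of_countable' (ENNReal.coe_ne_zero.2 hε.ne') ι
  choose ψ hψ hE hlt using fun i => exists_measurable_lintegral_rpow_lt_of_rieszCap_lt hs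
    (ENNReal.lt_add_right (ENNReal.ne_top_of_tsum_ne_top htop i) (hδ i).ne')
  calc rieszCap n α s (⋃ i, E i) ≤ ∑' i, ∫⁻ y, ψ i y ^ s :=
        rieszCap_iUnion_le_tsum_lintegral hs hψ hE
    _ ≤ ∑' i, (rieszCap n α s (E i) + δ i) := ENNReal.tsum_le_tsum fun i => (hlt i).le
    _ ≤ ∑' i, rieszCap n α s (E i) + ε := by
        rw [ENNReal.tsum_add]
        gcongr

lemma rieszCap_empty (hs : 0 < s) : rieszCap n α s ∅ = 0 := by
  simpa [hs] using rieszCap_le_lintegral (n := n) (α := α) (s := s) (E := ∅) (φ := 0)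

/-- The Riesz capacity bundled as an outer measure. -/
def rieszOuterMeasure (n : ℕ) (α : ℝ) (hs : 0 < s) : OuterMeasure (Rn n) where
  measureOf := rieszCap n α s
  empty := rieszCap_empty hs
  mono := rieszCap_mono
  iUnion_nat E _ := rieszCap_iUnion_le hs E

lemma coe_rieszOuterMeasure (hs : 0 < s) : ⇑(rieszOuterMeasure n α hs) = rieszCap n α s := rfl

lemma rieszCap_preimage_homothety_le (hs : 0 ≤ s) (x : Rn n) {r : ℝ} (hr : 0 < r)
    (E : Set (Rn n)) :
    rieszCap n α s ((fun z => r⁻¹ • (z - x)) ⁻¹' E) ≤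
      ENNReal.ofReal (r ^ ((n : ℝ) - α * s)) * rieszCap n α s E := by
  refine le_mul_rieszCap (ENNReal.ofReal_pos.2 (by positivity)).ne' ENNReal.ofReal_ne_top
    fun φ hφ _ => ?_
  set ψ : Rn n → ℝ≥0∞ := fun y => ENNReal.ofReal (r ^ (-α)) * φ (r⁻¹ • (y - x))
  have hpot : ∀ z, rieszPot n α ψ z = rieszPot n α φ (r⁻¹ • (z - x)) := fun z => by
    rw [rieszPot_const_mul ENNReal.ofReal_ne_top, rieszPot_comp_homothety hr, ← mul_assoc,
      ← ENNReal.ofReal_mul (by positivity), ← Real.rpow_add hr, neg_add_cancel, Real.rpow_zero,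
      ENNReal.ofReal_one, one_mul]
  calc rieszCap n α s ((fun z => r⁻¹ • (z - x)) ⁻¹' E) ≤ ∫⁻ y, ψ y ^ s :=
        rieszCap_le_lintegral fun z hz => (hφ _ hz).trans_eq (hpot z).symm
    _ = ENNReal.ofReal (r ^ (-α)) ^ s * (ENNReal.ofReal (r ^ n) * ∫⁻ y, φ y ^ s) := by
        rw [lintegral_const_mul_rpow volume hs ENNReal.ofReal_ne_top,
          lintegral_comp_inv_smul_sub volume (fun y => φ y ^ s) x hr, finrank_euclideanSpace_fin]
    _ = ENNReal.ofReal (r ^ ((n : ℝ) - α * s)) * ∫⁻ y, φ y ^ s := by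
        rw [ENNReal.ofReal_rpow_of_nonneg (by positivity) hs, ← Real.rpow_mul hr.le, ← mul_assoc,
          ← ENNReal.ofReal_mul (by positivity), ← Real.rpow_natCast, ← Real.rpow_add hr]
        congr 3
        ring

/-- The gauge `cap(B(0,1)) r^(n-αs)` by which `maximalCap` normalizes the average over a ball of
radius `r`. -/
def rieszGauge (n : ℕ) (α s r : ℝ) : ℝ≥0∞ :=
  rieszCap n α s (ball 0 1) * ENNReal.ofReal (r ^ ((n : ℝ) - α * s))

lemma maximalCap_eq_choquetMaximal (g : Rn n → ℝ≥0∞) :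
    maximalCap n α s g = choquetMaximal (rieszCap n α s) (rieszGauge n α s) g := rfl

lemma rieszGauge_mul {c : ℝ} (hc : 0 ≤ c) {r : ℝ} (hr : 0 ≤ r) :
    rieszGauge n α s (c * r) = ENNReal.ofReal (c ^ ((n : ℝ) - α * s)) * rieszGauge n α s r := by
  rw [rieszGauge, rieszGauge, Real.mul_rpow hc hr, ENNReal.ofReal_mul (by positivity),
    mul_left_comm]

lemma tendsto_rieszGauge_atTop (hcap : rieszCap n α s (ball 0 1) ≠ 0) (hd : α * s < n) :
    Filter.Tendsto (rieszGauge n α s) Filter.atTop (nhds ∞) := by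
  have hpow := ENNReal.tendsto_ofReal_nhds_top.2 (tendsto_rpow_atTop (sub_pos.2 hd))
  rw [← ENNReal.mul_top hcap]
  exact ENNReal.Tendsto.const_mul hpow (Or.inl ENNReal.top_ne_zero)

lemma rieszCap_ball_le_rieszGauge (hs : 0 ≤ s) (x : Rn n) {r : ℝ} (hr : 0 < r) :
    rieszCap n α s (ball x r) ≤ rieszGauge n α s r := by
  have hball : ball x r = (fun z => r⁻¹ • (z - x)) ⁻¹' ball (0 : Rn n) 1 := by
    ext z
    rw [mem_preimage, mem_ball_zero_iff, norm_smul, Real.norm_of_nonneg (inv_pos.2 hr).le,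
      inv_mul_lt_one₀ hr, mem_ball_iff_norm]
  rw [hball, rieszGauge, mul_comm]
  exact rieszCap_preimage_homothety_le hs x hr _

lemma two_rpow_mul_inv_two_le_rieszPot_or_rieszCap_inter_le (hαn : α ≤ n) (hs : 0 < s)
    {E : Set (Rn n)} {φ : Rn n → ℝ≥0∞} (hφ : ∀ x ∈ E, 1 ≤ rieszPot n α φ x) (x : Rn n) (r : ℝ) :
    ENNReal.ofReal (2 ^ (α - (n : ℝ))) * 2⁻¹ ≤ rieszPot n α φ x ∨
      rieszCap n α s (ball x r ∩ E) ≤ 2 ^ s * ∫⁻ y in ball x (2 * r), φ y ^ s := by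
  by_cases hfar : ∃ z ∈ ball x r ∩ E, 2⁻¹ ≤ rieszPot n α ((ball x (2 * r))ᶜ.indicator φ) z
  · obtain ⟨z, hz, hzfar⟩ := hfar
    left
    grw [hzfar]
    exact ofReal_two_rpow_mul_rieszPot_far_le hαn φ hz.1
  · right
    push Not at hfar
    have hnear : ball x r ∩ E ⊆ {z | 2⁻¹ ≤ rieszPot n α ((ball x (2 * r)).indicator φ) z} := by
      intro z hz
      by_contra hlt
      refine (hφ z hz.2).not_gt ?_
      rw [← rieszPot_near_add_far φ (measurableSet_ball (x := x) (ε := 2 * r)) z,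
        ← ENNReal.inv_two_add_inv_two]
      exact ENNReal.add_lt_add (not_le.1 hlt) (hfar z hz)
    calc rieszCap n α s (ball x r ∩ E)
        ≤ 2⁻¹⁻¹ ^ s * ∫⁻ y, (ball x (2 * r)).indicator φ y ^ s :=
          (rieszCap_mono hnear).trans
            (rieszCap_superlevel_rieszPot_le hs.le (by simp) (by simp) _)
      _ = 2 ^ s * ∫⁻ y in ball x (2 * r), φ y ^ s := by
          rw [inv_inv, ← lintegral_indicator measurableSet_ball]
          congr 2 with y
          by_cases hy : y ∈ ball x (2 * r) <;> simp [hy, hs]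

lemma highDensitySet_rieszCap_subset (hαn : α ≤ n) (hs : 0 < s) {E : Set (Rn n)}
    {φ : Rn n → ℝ≥0∞} (hφ : ∀ x ∈ E, 1 ≤ rieszPot n α φ x) (τ : ℝ≥0∞) :
    highDensitySet (rieszCap n α s) (rieszGauge n α s) E τ ⊆
      {x | ENNReal.ofReal (2 ^ (α - (n : ℝ))) * 2⁻¹ ≤ rieszPot n α φ x} ∪
      highDensitySet (volume.withDensity fun y => φ y ^ s) (rieszGauge n α s) univ
        (τ / (2 ^ s * ENNReal.ofReal (2 ^ ((n : ℝ) - α * s)))) := by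
  rintro x ⟨r, hr, hx⟩
  refine (two_rpow_mul_inv_two_le_rieszPot_or_rieszCap_inter_le hαn hs hφ x r).imp id
    fun hnear => ⟨2 * r, by positivity, ?_⟩
  rw [inter_univ, withDensity_apply _ measurableSet_ball, rieszGauge_mul zero_le_two hr.le]
  set d : ℝ := (n : ℝ) - α * s
  have hd0 : ENNReal.ofReal (2 ^ d) ≠ 0 := (ENNReal.ofReal_pos.2 (by positivity)).ne'
  calc τ / (2 ^ s * ENNReal.ofReal (2 ^ d)) * (ENNReal.ofReal (2 ^ d) * rieszGauge n α s r)
      = τ * rieszGauge n α s r / 2 ^ s := by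
        rw [← ENNReal.mul_div_right_comm, mul_comm (ENNReal.ofReal _) (rieszGauge _ _ _ _),
          ← mul_assoc, ENNReal.mul_div_mul_right _ _ hd0 ENNReal.ofReal_ne_top]
    _ < ∫⁻ y in ball x (2 * r), φ y ^ s := ENNReal.div_lt_of_lt_mul' (hx.trans_le hnear)

lemma rieszCap_highDensitySet_le_lintegral (hαn : α ≤ n) (hs : 0 < s) (hd : α * s < n)
    (hcap : rieszCap n α s (ball 0 1) ≠ 0) {E : Set (Rn n)} {φ : Rn n → ℝ≥0∞}
    (hφ : ∀ x ∈ E, 1 ≤ rieszPot n α φ x) (hφ_top : ∫⁻ y, φ y ^ s ≠ ∞) {τ : ℝ≥0∞} (hτ : τ ≠ 0) :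
    rieszCap n α s (highDensitySet (rieszCap n α s) (rieszGauge n α s) E τ) ≤
      (ENNReal.ofReal (2 ^ (α - (n : ℝ))) * 2⁻¹)⁻¹ ^ s * (∫⁻ y, φ y ^ s) +
        ENNReal.ofReal (6 ^ ((n : ℝ) - α * s)) *
          (2 ^ s * ENNReal.ofReal (2 ^ ((n : ℝ) - α * s)) / τ) * ∫⁻ y, φ y ^ s := by
  set ν : Measure (Rn n) := volume.withDensity fun y => φ y ^ s
  have hν : ν univ = ∫⁻ y, φ y ^ s := by rw [withDensity_apply _ .univ, Measure.restrict_univ]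
  have hpot := rieszCap_superlevel_rieszPot_le (n := n) (α := α)
    (c := ENNReal.ofReal (2 ^ (α - (n : ℝ))) * 2⁻¹) hs.le
    (mul_ne_zero (ENNReal.ofReal_pos.2 (by positivity)).ne' (by simp)) (by finiteness) φ
  have hvitali := outerMeasure_highDensitySet_le (rieszOuterMeasure n α hs)
    (fun x r hr => rieszCap_ball_le_rieszGauge hs.le x hr)
    (fun r hr => (rieszGauge_mul (by norm_num) hr.le).le) (tendsto_rieszGauge_atTop hcap hd)
    ν .univ (hν ▸ hφ_top)
    (σ := τ / (2 ^ s * ENNReal.ofReal (2 ^ ((n : ℝ) - α * s))))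
    (ENNReal.div_ne_zero.2 ⟨hτ, by finiteness⟩)
  rw [ENNReal.inv_div (Or.inl (by finiteness)) (Or.inr hτ), hν] at hvitali
  exact (rieszCap_mono (highDensitySet_rieszCap_subset hαn hs hφ τ)).trans <|
    (measure_union_le (μ := rieszOuterMeasure n α hs) _ _).trans (add_le_add hpot hvitali)

lemma exists_rieszCap_highDensitySet_le (hαn : α ≤ n) (hs : 0 < s) (hd : α * s < n) :
    ∃ K : ℝ≥0∞, K ≠ ∞ ∧ ∀ (E : Set (Rn n)) (τ : ℝ≥0∞), τ ≠ 0 →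
      rieszCap n α s (highDensitySet (rieszCap n α s) (rieszGauge n α s) E τ) ≤
        K * τ⁻¹ * rieszCap n α s E := by
  set a : ℝ≥0∞ := (ENNReal.ofReal (2 ^ (α - (n : ℝ))) * 2⁻¹)⁻¹ ^ s
  set b : ℝ≥0∞ := ENNReal.ofReal (6 ^ ((n : ℝ) - α * s)) *
    (2 ^ s * ENNReal.ofReal (2 ^ ((n : ℝ) - α * s)))
  have ha0 : a ≠ 0 := (ENNReal.rpow_pos_of_nonneg (ENNReal.inv_pos.2 (by finiteness)) hs.le).ne'
  have ha : a ≠ ∞ := ENNReal.rpow_ne_top_of_nonneg hs.le (ENNReal.inv_ne_top.2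
    (mul_ne_zero (ENNReal.ofReal_pos.2 (by positivity)).ne' (by simp)))
  have hb : b ≠ ∞ := by finiteness
  refine ⟨a + b, by finiteness, fun E τ hτ => ?_⟩
  by_cases htriv : 1 ≤ τ ∨ rieszCap n α s (ball 0 1) = 0
  · rw [← coe_rieszOuterMeasure hs, highDensitySet_eq_empty_of_le_mul, measure_empty]
    · exact zero_le
    · intro x r hr
      refine (rieszCap_ball_le_rieszGauge hs.le x hr).trans ?_
      rcases htriv with hτ1 | hcap
      · exact le_mul_of_one_le_left' hτ1
      · simp [rieszGauge, hcap]
  · push Not at htriv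
    obtain ⟨hτ1, hcap⟩ := htriv
    refine le_mul_rieszCap (by simp [ha0, hτ1.ne_top]) (by finiteness) fun φ hφ hφ_top =>
      (rieszCap_highDensitySet_le_lintegral hαn hs hd hcap hφ hφ_top hτ).trans ?_
    rw [← add_mul, add_mul a b, div_eq_mul_inv, ← mul_assoc]
    gcongr
    exact le_mul_of_one_le_right' (ENNReal.one_le_inv.2 hτ1.le)

end Riesz

theorem statement17_general (n : ℕ) (α s p : ℝ) (hα0 : 0 < α) (hαn : α < n) (hs0 : 0 < s)
    (hsn : s < n / α) (hp : 1 < p) :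
    ∃ C : ℝ, 0 < C ∧ ∀ g : Rn n → ℝ≥0∞,
      choquet (rieszCap n α s) (fun x => maximalCap n α s g x ^ p) ≤
        ENNReal.ofReal C * choquet (rieszCap n α s) (fun x => g x ^ p) := by
  obtain ⟨K, hK, hdens⟩ :=
    exists_rieszCap_highDensitySet_le hαn.le hs0 ((lt_div_iff₀' hα0).1 hsn)
  obtain ⟨Q, hQ, hmax⟩ := exists_choquet_choquetMaximal_rpow_le (rieszOuterMeasure n α hs0) hK
    (fun x r hr => rieszCap_ball_le_rieszGauge hs0.le x hr) hdens hp
  refine ⟨Q.toReal + 1, by positivity, fun g => ?_⟩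
  have hQ_le : Q ≤ ENNReal.ofReal (Q.toReal + 1) :=
    ENNReal.le_ofReal_iff_toReal_le hQ (by positivity) |>.2 (le_add_of_nonneg_right zero_le_one)
  rw [maximalCap_eq_choquetMaximal, ← coe_rieszOuterMeasure hs0]
  exact (hmax g).trans (by gcongr)

/-- Strong-type `(p,p)` bound for the Riesz capacitary maximal
function on `L^p(cap_{α,s})`, `1 < p < ∞`. -/
theorem statement17 (n : ℕ) (α s p : ℝ) (hα0 : 0 < α) (hαn : α < n)
    (hs1 : 1 < s) (hsn : s < n / α) (hp : 1 < p) :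
    ∃ C : ℝ, 0 < C ∧ ∀ f : Rn n → ℝ, MemChoquetLp (rieszCap n α s) p f →
      choquet (rieszCap n α s)
          (fun x => (maximalCap n α s (fun y => ENNReal.ofReal |f y|) x) ^ p) ≤
        ENNReal.ofReal C * choquet (rieszCap n α s) (fun x => ENNReal.ofReal |f x| ^ p) := by
  obtain ⟨C, hC, hbound⟩ :=
    statement17_general n α s p hα0 hαn (zero_lt_one.trans hs1) hsn hp
  exact ⟨C, hC, fun f _ => hbound fun y => ENNReal.ofReal |f y|⟩

end
end

section
/- Let β ∈ (0,n), p ∈ [1,∞), and f ∈ L^p(H^β_∞). Then for H^β-almost every x ∈ ℝ^n, the precise representative f*(x) := lim_{r→0} (1/|B(x,r)|) ∫_{B(x,r)} f dy exists and lim_{r→0} (1/(ω_β r^β)) ∫_{B(x,r)} |f - f*(x)|^p dH^β_∞ = 0. -/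
open scoped ENNReal
open Metric Set MeasureTheory

noncomputable section

/-- The normalization constant `ω_β = π^{β/2}/Γ(β/2+1)`. -/
noncomputable def omegaC (β : ℝ) : ℝ≥0∞ :=
  ENNReal.ofReal (Real.pi ^ (β / 2) / Real.Gamma (β / 2 + 1))

/-- The `β`-dimensional Hausdorff content `H^β_∞`, defined via countable
coverings by balls: `inf {∑ ω_β r_i^β : E ⊆ ⋃ B(x_i, r_i)}`. -/
noncomputable def hContent (n : ℕ) (β : ℝ) (E : Set (Rn n)) : ℝ≥0∞ :=
  ⨅ (c : ℕ → Rn n × ℝ) (_ : E ⊆ ⋃ i, ball (c i).1 (c i).2),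
    ∑' i, omegaC β * ENNReal.ofReal ((c i).2 ^ β)

/-- The centered Hausdorff content maximal function
`M_{H^β_∞} g(x) := sup_{r>0} (1/(ω_β r^β)) ∫_{B(x,r)} g dH^β_∞`. -/
noncomputable def maximalH (n : ℕ) (β : ℝ) (g : Rn n → ℝ≥0∞) (x : Rn n) : ℝ≥0∞ :=
  ⨆ (r : ℝ) (_ : 0 < r),
    (omegaC β * ENNReal.ofReal (r ^ β))⁻¹ * choquetOn (hContent n β) (ball x r) g

open Filter Topology

/-!
The content is almost additive over a disjoint packing of balls, i.e. a family in which the balls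
lying in any given ball of radius `s` have total weight at most a multiple of `s ^ β`, and by
Melnikov's covering lemma every family of balls is controlled by such packings. This gives the weak
type bound for the maximal function.

By quasicontinuity `f` is continuous off open sets `U` of arbitrarily small content. At a point off
such a `U`, the part of `|f - f x|^p` off `U` does not contribute to the limit of the averages, so
the limiting oscillation is at most the maximal function of the part on `U`. Where `|f x| ≤ m`, the
latter is bounded by the maximal function of `2^p max(|f|^p, m^p)` restricted to `U`, whose Choquet
integral tends to `0` with the content of `U`; hence the oscillation vanishes almost everywhere.

As `β ≤ n`, volume averages over a ball are bounded by Choquet averages, and Jensen's inequality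
gives the convergence of the averages of `f` to `f x`.
-/

section Choquet

variable {X : Type*} {C : Set X → ℝ≥0∞}

lemma measurable_apply_superlevel (hC : Monotone C) (A : Set X) (g : X → ℝ≥0∞) :
    Measurable fun t : ℝ => C {x | x ∈ A ∧ ENNReal.ofReal t < g x} :=
  Antitone.measurable fun _ _ hst =>
    hC fun _ hx => ⟨hx.1, (ENNReal.ofReal_le_ofReal hst).trans_lt hx.2⟩

lemma choquetOn_univ (C : Set X → ℝ≥0∞) (g : X → ℝ≥0∞) : choquetOn C univ g = choquet C g := by
  simp only [choquetOn, choquet, mem_univ, true_and]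

lemma choquetOn_indicator (C : Set X → ℝ≥0∞) (A U : Set X) (g : X → ℝ≥0∞) :
    choquetOn C A (U.indicator g) = choquetOn C (A ∩ U) g := by
  have superlevel (t : ℝ) : {x | x ∈ A ∧ ENNReal.ofReal t < U.indicator g x} =
      {x | x ∈ A ∩ U ∧ ENNReal.ofReal t < g x} := by
    ext x
    by_cases hx : x ∈ U <;> simp [hx]
  simp only [choquetOn, superlevel]

lemma choquet_indicator (C : Set X → ℝ≥0∞) (U : Set X) (g : X → ℝ≥0∞) :
    choquet C (U.indicator g) = choquetOn C U g := by
  rw [← choquetOn_univ, choquetOn_indicator, univ_inter]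

lemma choquetOn_mono (hC : Monotone C) {A B : Set X} (hAB : A ⊆ B) {g h : X → ℝ≥0∞}
    (hgh : ∀ x ∈ A, g x ≤ h x) : choquetOn C A g ≤ choquetOn C B h :=
  lintegral_mono fun _ => hC fun x hx => ⟨hAB hx.1, hx.2.trans_le (hgh x hx.1)⟩

lemma choquetOn_sup_le (hC : Monotone C) (hunion : ∀ A B, C (A ∪ B) ≤ C A + C B) (A : Set X)
    (g h : X → ℝ≥0∞) : choquetOn C A (g ⊔ h) ≤ choquetOn C A g + choquetOn C A h := by
  simp only [choquetOn]
  rw [← lintegral_add_left (measurable_apply_superlevel hC A g)]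
  refine lintegral_mono fun t => (hC fun x hx => ?_).trans (hunion _ _)
  exact (lt_sup_iff.1 hx.2).imp (And.intro hx.1) (And.intro hx.1)

lemma volume_Ioi_zero_inter_ofReal_lt (M : ℝ≥0∞) :
    volume ({t : ℝ | ENNReal.ofReal t < M} ∩ Ioi 0) = M := by
  induction M with
  | top => simp
  | coe M =>
    have : {t : ℝ | ENNReal.ofReal t < M} ∩ Ioi 0 = Ioo 0 (M : ℝ) := by
      ext t
      exact and_comm.trans (and_congr_right fun ht : 0 < t => ENNReal.ofReal_lt_coe_iff ht.le)
    rw [this, Real.volume_Ioo, sub_zero, ENNReal.ofReal_coe_nnreal]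

lemma choquetOn_le_mul (hC : Monotone C) (hempty : C ∅ = 0) {A : Set X} {g : X → ℝ≥0∞}
    {M : ℝ≥0∞} (hg : ∀ x ∈ A, g x ≤ M) : choquetOn C A g ≤ M * C A := by
  have hmeas : MeasurableSet {t : ℝ | ENNReal.ofReal t < M} :=
    measurableSet_lt ENNReal.measurable_ofReal measurable_const
  calc choquetOn C A g
      ≤ ∫⁻ t in Ioi (0 : ℝ), {t : ℝ | ENNReal.ofReal t < M}.indicator (fun _ => C A) t := by
        refine lintegral_mono fun t => ?_
        by_cases ht : ENNReal.ofReal t < M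
        · rw [indicator_of_mem (by exact ht)]
          exact hC fun x hx => hx.1
        · have : {x | x ∈ A ∧ ENNReal.ofReal t < g x} = ∅ :=
            eq_empty_of_forall_notMem fun x hx => ht (hx.2.trans_le (hg x hx.1))
          simp only [this, hempty, zero_le]
    _ = M * C A := by
        rw [lintegral_indicator_const hmeas, Measure.restrict_apply hmeas,
          volume_Ioi_zero_inter_ofReal_lt, mul_comm]

lemma lintegral_Ioi_comp_div {a : ℝ} (ha : 0 < a) (G : ℝ → ℝ≥0∞) :
    ∫⁻ t in Ioi (0 : ℝ), G (t / a) = ENNReal.ofReal a * ∫⁻ t in Ioi (0 : ℝ), G t := by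
  have change_of_variables := lintegral_image_eq_lintegral_abs_deriv_mul (s := Ioi (0 : ℝ))
    (f := (a * ·)) (f' := fun _ => a) measurableSet_Ioi
    (fun x _ => by simpa using ((hasDerivAt_id x).const_mul a).hasDerivWithinAt)
    (mul_right_injective₀ ha.ne').injOn (fun t => G (t / a))
  rw [image_mul_left_Ioi ha, mul_zero] at change_of_variables
  rw [change_of_variables, abs_of_pos ha, ← lintegral_const_mul' _ _ ENNReal.ofReal_ne_top]
  simp only [mul_div_cancel_left₀ _ ha.ne']

lemma choquetOn_const_mul (C : Set X → ℝ≥0∞) (A : Set X) {a : ℝ} (ha : 0 < a) (g : X → ℝ≥0∞) :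
    choquetOn C A (fun x => ENNReal.ofReal a * g x) = ENNReal.ofReal a * choquetOn C A g := by
  have superlevel (t : ℝ) : {x | x ∈ A ∧ ENNReal.ofReal t < ENNReal.ofReal a * g x} =
      {x | x ∈ A ∧ ENNReal.ofReal (t / a) < g x} := by
    simp only [ENNReal.ofReal_div_of_pos ha, ENNReal.div_lt_iff
      (Or.inl (ENNReal.ofReal_pos.2 ha).ne') (Or.inl ENNReal.ofReal_ne_top), mul_comm]
  simp only [choquetOn, superlevel]
  exact lintegral_Ioi_comp_div ha fun t => C {x | x ∈ A ∧ ENNReal.ofReal t < g x}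

lemma tendsto_choquetOn_zero (hC : Monotone C) {g : X → ℝ≥0∞} (hg : choquet C g ≠ ∞)
    {U : ℕ → Set X} (hU : Tendsto (fun k => C (U k)) atTop (𝓝 0)) :
    Tendsto (fun k => choquetOn C (U k) g) atTop (𝓝 0) := by
  have dominated := tendsto_lintegral_of_dominated_convergence (μ := volume.restrict (Ioi (0 : ℝ)))
    (F := fun k t => C {x | x ∈ U k ∧ ENNReal.ofReal t < g x}) (f := fun _ => 0)
    (fun t => C {x | ENNReal.ofReal t < g x})
    (fun k => measurable_apply_superlevel hC (U k) g)
    (fun k => .of_forall fun t => hC fun x hx => hx.2) hg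
    (.of_forall fun t => tendsto_of_tendsto_of_tendsto_of_le_of_le tendsto_const_nhds hU
      (fun _ => zero_le) fun k => hC fun x hx => hx.1)
  simpa only [choquetOn, lintegral_zero] using dominated

lemma choquet_measure_eq_lintegral [MeasurableSpace X] (μ : Measure X) {g : X → ℝ≥0∞}
    (hg : AEMeasurable g μ) (hg_top : ∀ x, g x ≠ ∞) : choquet μ g = ∫⁻ x, g x ∂μ := by
  have layer_cake := lintegral_eq_lintegral_meas_lt μ
    (.of_forall fun x => ENNReal.toReal_nonneg (a := g x)) hg.ennreal_toReal
  simp only [ENNReal.ofReal_toReal (hg_top _)] at layer_cake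
  rw [layer_cake, choquet]
  exact setLIntegral_congr_fun measurableSet_Ioi fun t (ht : 0 < t) => by
    simp only [ENNReal.ofReal_lt_iff_lt_toReal ht.le (hg_top _)]

end Choquet

section QuasiContinuity

variable {X : Type*} [TopologicalSpace X] {C : Set X → ℝ≥0∞} {f : X → ℝ}

lemma QuasiCont.exists_seq (hf : QuasiCont C f) :
    ∃ U : ℕ → Set X, (∀ k, IsOpen (U k)) ∧ (∀ k, ContinuousOn f (U k)ᶜ) ∧
      Tendsto (fun k => C (U k)) atTop (𝓝 0) := by
  choose U hUo hU hUc using fun k : ℕ => hf (k : ℝ≥0∞)⁻¹ (by simp)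
  exact ⟨U, hUo, hUc, tendsto_of_tendsto_of_tendsto_of_le_of_le tendsto_const_nhds
    ENNReal.tendsto_inv_nat_nhds_zero (fun _ => zero_le) fun k => (hU k).le⟩

lemma QuasiCont.aestronglyMeasurable [MeasurableSpace X] [OpensMeasurableSpace X] {μ : Measure X}
    (hC : Monotone C) (hnull : ∀ E, C E = 0 → μ E = 0) (hf : QuasiCont C f) :
    AEStronglyMeasurable f μ := by
  obtain ⟨U, hUo, hUc, hU⟩ := hf.exists_seq
  have aesm_iUnion : AEStronglyMeasurable f (μ.restrict (⋃ k, (U k)ᶜ)) :=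
    aestronglyMeasurable_iUnion_iff.2 fun k =>
      (hUc k).aestronglyMeasurable (hUo k).measurableSet.compl
  have null_compl : μ (⋃ k, (U k)ᶜ)ᶜ = 0 := by
    refine hnull _ (le_antisymm (ge_of_tendsto' hU fun k => hC ?_) zero_le)
    simpa only [compl_iUnion, compl_compl] using iInter_subset U k
  rwa [Measure.restrict_eq_self_of_ae_mem (by rwa [ae_iff])] at aesm_iUnion

end QuasiContinuity

section Content

variable {n : ℕ} {β : ℝ}

lemma omegaC_ne_zero (hβ : 0 < β) : omegaC β ≠ 0 := by
  have : 0 < Real.Gamma (β / 2 + 1) := Real.Gamma_pos_of_pos (by positivity)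
  simp only [omegaC, ne_eq, ENNReal.ofReal_eq_zero, not_le]
  positivity

lemma omegaC_ne_top : omegaC β ≠ ∞ := ENNReal.ofReal_ne_top

lemma omegaC_mul_rpow_ne_zero (hβ : 0 < β) {r : ℝ} (hr : 0 < r) :
    omegaC β * ENNReal.ofReal (r ^ β) ≠ 0 :=
  mul_ne_zero (omegaC_ne_zero hβ) (ENNReal.ofReal_pos.2 (Real.rpow_pos_of_pos hr β)).ne'

lemma omegaC_mul_rpow_ne_top {r : ℝ} : omegaC β * ENNReal.ofReal (r ^ β) ≠ ∞ :=
  ENNReal.mul_ne_top omegaC_ne_top ENNReal.ofReal_ne_top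

lemma monotone_hContent : Monotone (hContent n β) := fun _ _ h =>
  le_iInf₂ fun c hc => iInf₂_le c (h.trans hc)

lemma hContent_le_tsum (hβ : 0 < β) {ι : Type*} [Countable ι] {E : Set (Rn n)}
    (y : ι → Rn n) (s : ι → ℝ) (h : E ⊆ ⋃ i, ball (y i) (s i)) :
    hContent n β E ≤ ∑' i, omegaC β * ENNReal.ofReal (s i ^ β) := by
  obtain ⟨e, he⟩ := exists_injective_nat ι
  -- Indices outside the range of `e` get radius `0`: an empty ball of weight `0 ^ β = 0`.
  let c : ℕ → Rn n × ℝ := Function.extend e (fun i => (y i, s i)) 0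
  refine (iInf₂_le c fun x hx => ?_).trans_eq ?_
  · obtain ⟨i, hi⟩ := mem_iUnion.1 (h hx)
    exact mem_iUnion.2 ⟨e i, by simpa only [c, he.extend_apply] using hi⟩
  · rw [← tsum_extend_zero he]
    congr 1 with k
    by_cases hk : ∃ i, e i = k
    · obtain ⟨i, rfl⟩ := hk
      simp [c, he.extend_apply]
    · simp [c, Function.extend_apply' _ _ _ hk, Real.zero_rpow hβ.ne']

lemma hContent_ball_le (hβ : 0 < β) (x : Rn n) (r : ℝ) :
    hContent n β (ball x r) ≤ omegaC β * ENNReal.ofReal (r ^ β) := by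
  simpa using hContent_le_tsum hβ (ι := Unit) (fun _ => x) (fun _ => r)
    (subset_iUnion (fun _ : Unit => ball x r) ())

lemma hContent_empty (hβ : 0 < β) : hContent n β ∅ = 0 := by
  simpa using hContent_le_tsum hβ (n := n) (E := ∅) (ι := Empty) (fun _ => 0) (fun _ => 0)
    (empty_subset _)

lemma exists_cover_tsum_lt {E : Set (Rn n)} {a : ℝ≥0∞} (h : hContent n β E < a) :
    ∃ c : ℕ → Rn n × ℝ, E ⊆ ⋃ k, ball (c k).1 (c k).2 ∧
      ∑' k, omegaC β * ENNReal.ofReal ((c k).2 ^ β) < a := by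
  simpa only [hContent, iInf_lt_iff, exists_prop] using h

lemma hContent_iUnion_le (hβ : 0 < β) {ι : Type*} [Countable ι] (E : ι → Set (Rn n)) :
    hContent n β (⋃ i, E i) ≤ ∑' i, hContent n β (E i) := by
  refine ENNReal.le_of_forall_pos_le_add fun ε hε hfin => ?_
  obtain ⟨δ, hδ, hδε⟩ := ENNReal.exists_pos_sum_of_countable (ENNReal.coe_pos.2 hε).ne' ι
  choose c hcE hc using fun i => exists_cover_tsum_lt
    (ENNReal.lt_add_right (ne_top_of_le_ne_top hfin.ne (ENNReal.le_tsum i))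
      (ENNReal.coe_pos.2 (hδ i)).ne')
  calc hContent n β (⋃ i, E i)
      ≤ ∑' q : ι × ℕ, omegaC β * ENNReal.ofReal ((c q.1 q.2).2 ^ β) := by
        refine hContent_le_tsum hβ (fun q : ι × ℕ => (c q.1 q.2).1) _ fun x hx => ?_
        obtain ⟨i, hi⟩ := mem_iUnion.1 hx
        obtain ⟨k, hk⟩ := mem_iUnion.1 (hcE i hi)
        exact mem_iUnion.2 ⟨(i, k), hk⟩
    _ = ∑' i, ∑' k, omegaC β * ENNReal.ofReal ((c i k).2 ^ β) := ENNReal.tsum_prod'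
    _ ≤ ∑' i, (hContent n β (E i) + δ i) := ENNReal.tsum_le_tsum fun i => (hc i).le
    _ = ∑' i, hContent n β (E i) + ∑' i, (δ i : ℝ≥0∞) := ENNReal.tsum_add
    _ ≤ ∑' i, hContent n β (E i) + ε := by gcongr

lemma hContent_union_le (hβ : 0 < β) (E F : Set (Rn n)) :
    hContent n β (E ∪ F) ≤ hContent n β E + hContent n β F := by
  rw [union_eq_iUnion]
  refine (hContent_iUnion_le hβ _).trans_eq ?_
  simp only [tsum_fintype, Fintype.sum_bool, cond_true, cond_false]

end Content

section Packing

variable {α ι : Type*} [PseudoMetricSpace α] {β : ℝ} {c : ι → α} {r : ι → ℝ}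

/-- Melnikov's packing condition on the balls `B(c i, r i)`, `i ∈ S`: the weights `r i ^ β` of those
which are centered in, and no larger than, a given ball of radius `s` add up to at most `2 s ^ β`.
The slack `2` leaves room to add one more ball to a subfamily of weight below `s ^ β`. -/
def IsPacking (β : ℝ) (c : ι → α) (r : ι → ℝ) (S : Set ι) : Prop :=
  ∀ T : Finset ι, ↑T ⊆ S → ∀ (y : α) (s : ℝ), 0 < s → (∀ i ∈ T, dist (c i) y ≤ s ∧ r i ≤ s) →
    ∑ i ∈ T, ENNReal.ofReal (r i ^ β) ≤ 2 * ENNReal.ofReal (s ^ β)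

/-- The closed ball `B(y, s)` is saturated by the balls `B(c i, r i)`, `i ∈ T`: these are centered
in it, and their weights `r i ^ β` add up to at least its own weight `s ^ β`. -/
def IsSaturatedBy (β : ℝ) (c : ι → α) (r : ι → ℝ) (y : α) (s : ℝ) (T : Finset ι) : Prop :=
  (∀ i ∈ T, dist (c i) y ≤ s) ∧ ENNReal.ofReal (s ^ β) ≤ ∑ i ∈ T, ENNReal.ofReal (r i ^ β)

lemma IsPacking.mono {S S' : Set ι} (hS : IsPacking β c r S) (h : S' ⊆ S) : IsPacking β c r S' :=
  fun T hT => hS T (hT.trans h)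

lemma isPacking_singleton (hβ : 0 ≤ β) {i : ι} (hi : 0 ≤ r i) : IsPacking β c r {i} := by
  intro T hT y s _ h
  calc ∑ j ∈ T, ENNReal.ofReal (r j ^ β)
      ≤ ∑ _j ∈ T, ENNReal.ofReal (s ^ β) := by
        refine Finset.sum_le_sum fun j hj => ENNReal.ofReal_le_ofReal ?_
        obtain rfl : j = i := hT hj
        exact Real.rpow_le_rpow hi (h j hj).2 hβ
    _ ≤ 2 * ENNReal.ofReal (s ^ β) := by
        rw [Finset.sum_const, nsmul_eq_mul]
        gcongr
        have : T.card ≤ 1 := Finset.card_le_one.2 fun a ha b hb => (hT ha).trans (hT hb).symm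
        exact_mod_cast this.trans one_le_two

lemma IsPacking.sUnion {F : Set (Set ι)} (hchain : IsChain (· ⊆ ·) F)
    (hF : ∀ S ∈ F, IsPacking β c r S) : IsPacking β c r (⋃₀ F) := by
  intro T hT y s hs h
  rcases F.eq_empty_or_nonempty with rfl | hne
  · rw [sUnion_empty, subset_empty_iff, Finset.coe_eq_empty] at hT
    subst hT
    simp only [Finset.sum_empty, zero_le]
  · obtain ⟨S, hSF, hTS⟩ := hchain.directedOn.exists_mem_subset_of_finset_subset_biUnion hne
      (by simpa only [sUnion_eq_biUnion] using hT)
    exact hF S hSF T hTS y s hs h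

/-- If `insert j S` violates the packing condition at `B(y, s)`, then, since `r j ^ β ≤ s ^ β` is
only half of the allowed weight, the violating balls other than `j` already saturate `B(y, s)`. -/
lemma IsPacking.exists_isSaturatedBy_of_not_insert (hβ : 0 ≤ β) {S : Set ι} {j : ι} (hj : 0 ≤ r j)
    (hS : IsPacking β c r S) (h : ¬IsPacking β c r (insert j S)) :
    ∃ (y : α) (s : ℝ) (T : Finset ι), ↑T ⊆ S ∧ dist (c j) y ≤ s ∧ r j ≤ s ∧
      IsSaturatedBy β c r y s T := by
  classical
  simp only [IsPacking, not_forall, not_le] at h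
  obtain ⟨T, hTS, y, s, hs, hT, hlt⟩ := h
  have hjT : j ∈ T := by
    by_contra hjT
    refine hlt.not_ge (hS T (fun i hi => ?_) y s hs hT)
    exact (hTS hi).resolve_left fun hij => hjT (hij ▸ hi)
  have erase_subset : ↑(T.erase j) ⊆ S := fun i hi => by
    obtain ⟨hij, hi⟩ := Finset.mem_erase.1 hi
    exact (hTS hi).resolve_left hij
  have weight_j_le : ENNReal.ofReal (r j ^ β) ≤ ENNReal.ofReal (s ^ β) :=
    ENNReal.ofReal_le_ofReal (Real.rpow_le_rpow hj (hT j hjT).2 hβ)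
  refine ⟨y, s, T.erase j, erase_subset, (hT j hjT).1, (hT j hjT).2,
    fun i hi => (hT i (Finset.mem_of_mem_erase hi)).1, ?_⟩
  by_contra! hlight
  refine hlt.not_ge ?_
  rw [← Finset.add_sum_erase T _ hjT, two_mul]
  exact add_le_add weight_j_le hlight.le

lemma exists_isPacking_forall_isSaturatedBy (hβ : 0 ≤ β) {u : Set ι} (hr : ∀ i ∈ u, 0 ≤ r i) :
    ∃ S ⊆ u, IsPacking β c r S ∧ ∀ j ∈ u, ∃ (y : α) (s : ℝ) (T : Finset ι), ↑T ⊆ S ∧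
      dist (c j) y ≤ s ∧ r j ≤ s ∧ IsSaturatedBy β c r y s T := by
  obtain ⟨S, hS⟩ := zorn_subset {S | S ⊆ u ∧ IsPacking β c r S} fun F hF hchain =>
    ⟨⋃₀ F, ⟨sUnion_subset fun S hS => (hF hS).1, .sUnion hchain fun S hS => (hF hS).2⟩,
      fun S hS => subset_sUnion_of_mem hS⟩
  obtain ⟨hSu, hSp⟩ := hS.prop
  refine ⟨S, hSu, hSp, fun j hj => ?_⟩
  by_cases hjS : j ∈ S
  · refine ⟨c j, r j, {j}, by simpa only [Finset.coe_singleton, singleton_subset_iff] using hjS,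
      (dist_self _).trans_le (hr j hj), le_rfl, fun i hi => ?_, (Finset.sum_singleton _ _).ge⟩
    rw [Finset.mem_singleton.1 hi, dist_self]
    exact hr j hj
  · exact hSp.exists_isSaturatedBy_of_not_insert hβ (hr j hj) fun hins =>
      hjS (hS.le_of_ge ⟨insert_subset hj hSu, hins⟩ (subset_insert j S) (mem_insert j S))

lemma tsum_finset_sum_le_of_pairwiseDisjoint {κ : Type*} {v : Set κ} {T : κ → Finset ι}
    (hT : v.PairwiseDisjoint T) {S : Set ι} (hTS : ∀ j ∈ v, ↑(T j) ⊆ S) {a : ι → ℝ≥0∞} {K : ℝ≥0∞}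
    (hK : ∀ F : Finset ι, ↑F ⊆ S → ∑ i ∈ F, a i ≤ K) : ∑' j : v, ∑ i ∈ T j, a i ≤ K := by
  classical
  rw [ENNReal.tsum_eq_iSup_sum]
  refine iSup_le fun W => ?_
  have hTW : (W : Set v).PairwiseDisjoint fun j => T j := fun i _ j _ hij =>
    hT i.2 j.2 (Subtype.coe_injective.ne hij)
  rw [← Finset.sum_biUnion hTW]
  refine hK _ fun i hi => ?_
  obtain ⟨j, -, hij⟩ := Finset.mem_biUnion.1 hi
  exact hTS j j.2 hij

lemma le_toReal_rpow_inv_of_ofReal_rpow_le (hβ : 0 < β) {s : ℝ} (hs : 0 ≤ s) {K : ℝ≥0∞}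
    (hK : K ≠ ∞) (h : ENNReal.ofReal (s ^ β) ≤ K) : s ≤ K.toReal ^ β⁻¹ := by
  rwa [Real.le_rpow_inv_iff_of_pos hs ENNReal.toReal_nonneg hβ,
    ← ENNReal.ofReal_le_iff_le_toReal hK]

/-- The Vitali selection is made among the balls `B(y j, 6 s j)`: they contain `B(c j, 5 r j)`, and
when they are disjoint so are the families `T j` which saturate the balls `B(y j, s j)`. -/
lemma exists_pairwiseDisjoint_saturatedBy_cover {u : Set ι} {y : ι → α} {s : ι → ℝ}
    {T : ι → Finset ι} {R : ℝ} (hs : ∀ j ∈ u, 0 ≤ s j) (hR : ∀ j ∈ u, s j ≤ R)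
    (hy : ∀ j ∈ u, dist (c j) (y j) ≤ s j) (hrs : ∀ j ∈ u, r j ≤ s j)
    (hT : ∀ j ∈ u, IsSaturatedBy β c r (y j) (s j) (T j)) :
    ∃ v ⊆ u, v.PairwiseDisjoint T ∧
      ∀ b ∈ u, ∃ j ∈ v, closedBall (c b) (5 * r b) ⊆ closedBall (y j) (30 * s j) := by
  obtain ⟨v, hvu, hdisj, hcover⟩ :=
    Vitali.exists_disjoint_subfamily_covering_enlargement_closedBall u y (fun j => 6 * s j) (6 * R)
      (fun j hj => by gcongr; exact hR j hj) 5 (by norm_num)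
  have center_mem {j i} (hj : j ∈ v) (hi : i ∈ T j) : c i ∈ closedBall (y j) (6 * s j) :=
    ((hT j (hvu hj)).1 i hi).trans (by linarith [hs j (hvu hj)])
  refine ⟨v, hvu, fun j hj k hk hjk => Finset.disjoint_left.2 fun i hij hik =>
    disjoint_left.1 (hdisj hj hk hjk) (center_mem hj hij) (center_mem hk hik), fun b hb => ?_⟩
  obtain ⟨j, hj, hbj⟩ := hcover b hb
  refine ⟨j, hj, (closedBall_subset_closedBall' ?_).trans (hbj.trans_eq ?_)⟩
  · linarith [hy b hb, hrs b hb]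
  · ring_nf

lemma exists_cover_tsum_rpow_le_of_isPacking (hβ : 0 < β) {I : Set ι} (hr : ∀ i ∈ I, 0 < r i)
    {K : ℝ≥0∞} (hK_top : K ≠ ∞)
    (hK : ∀ T : Finset ι, ↑T ⊆ I → (T : Set ι).PairwiseDisjoint (fun i => closedBall (c i) (r i)) →
      IsPacking β c r T → ∑ i ∈ T, ENNReal.ofReal (r i ^ β) ≤ K) :
    ∃ (v : Set ι) (y : ι → α) (s : ι → ℝ), (∀ j ∈ v, 0 < s j) ∧
      ⋃ i ∈ I, closedBall (c i) (r i) ⊆ ⋃ j ∈ v, closedBall (y j) (30 * s j) ∧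
      ∑' j : v, ENNReal.ofReal (s j ^ β) ≤ K := by
  rcases I.eq_empty_or_nonempty with rfl | ⟨i₀, -⟩
  · exact ⟨∅, c, r, by simp⟩
  have : Nonempty α := ⟨c i₀⟩
  have radius_le (i) (hi : i ∈ I) : r i ≤ K.toReal ^ β⁻¹ := by
    refine le_toReal_rpow_inv_of_ofReal_rpow_le hβ (hr i hi).le hK_top ?_
    have singleton_bound := hK {i}
    rw [Finset.coe_singleton, singleton_subset_iff, Finset.sum_singleton] at singleton_bound
    exact singleton_bound hi (pairwiseDisjoint_singleton _ _)
      (isPacking_singleton hβ.le (hr i hi).le)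
  obtain ⟨u, huI, hu_disj, hu_cover⟩ :=
    Vitali.exists_disjoint_subfamily_covering_enlargement_closedBall I c r _ radius_le 5
      (by norm_num)
  obtain ⟨S, hSu, hS, hsat⟩ :=
    exists_isPacking_forall_isSaturatedBy (c := c) hβ.le fun i hi => (hr i (huI hi)).le
  have weight_le (T : Finset ι) (hT : ↑T ⊆ S) : ∑ i ∈ T, ENNReal.ofReal (r i ^ β) ≤ K :=
    hK T (hT.trans (hSu.trans huI)) (hu_disj.subset (hT.trans hSu)) (hS.mono hT)
  choose! y s T hTS hy hrs hT using hsat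
  have s_pos (j) (hj : j ∈ u) : 0 < s j := (hr j (huI hj)).trans_le (hrs j hj)
  obtain ⟨v, hvu, hT_disj, hv_cover⟩ := exists_pairwiseDisjoint_saturatedBy_cover
    (fun j hj => (s_pos j hj).le) (fun j hj => le_toReal_rpow_inv_of_ofReal_rpow_le hβ
      (s_pos j hj).le hK_top ((hT j hj).2.trans (weight_le _ (hTS j hj)))) hy hrs hT
  refine ⟨v, y, s, fun j hj => s_pos j (hvu hj), iUnion₂_subset fun i hi => ?_, ?_⟩
  · obtain ⟨b, hb, hib⟩ := hu_cover i hi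
    obtain ⟨j, hj, hbj⟩ := hv_cover b hb
    exact (hib.trans hbj).trans (subset_biUnion_of_mem
      (u := fun j => closedBall (y j) (30 * s j)) hj)
  · exact (ENNReal.tsum_le_tsum fun j : v => (hT j (hvu j.2)).2).trans
      (tsum_finset_sum_le_of_pairwiseDisjoint hT_disj (fun j hj => hTS j (hvu hj)) weight_le)

end Packing

section NormedSpace

variable {E : Type*} [NormedAddCommGroup E] [NormedSpace ℝ E]

lemma exists_ball_subset_ball_of_mem {x z : E} {r s : ℝ} (hz : z ∈ ball x r) (hs : 0 ≤ s)
    (hsr : s ≤ r) : ∃ w, dist w z ≤ s ∧ ball w s ⊆ ball x r := by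
  have hr : 0 < r := pos_of_mem_ball hz
  have hsr' : s / r ≤ 1 := (div_le_one hr).2 hsr
  rw [mem_ball] at hz
  refine ⟨AffineMap.lineMap z x (s / r), ?_, ball_subset_ball' ?_⟩
  · rw [dist_lineMap_left, Real.norm_of_nonneg (by positivity)]
    calc s / r * dist z x ≤ s / r * r := by gcongr
      _ = s := div_mul_cancel₀ s hr.ne'
  · rw [dist_lineMap_right, Real.norm_of_nonneg (by linarith)]
    calc s + (1 - s / r) * dist z x ≤ s + (1 - s / r) * r := by gcongr
      _ = r := by field_simp; ring

lemma card_le_of_separated_of_dist_le [FiniteDimensional ℝ E] {ι : Type*} {T : Finset ι}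
    {w : ι → E} {y : E} {s : ℝ} (hs : 0 < s) (hw : ∀ i ∈ T, dist (w i) y ≤ 2 * s)
    (hsep : ∀ i ∈ T, ∀ j ∈ T, i ≠ j → s ≤ dist (w i) (w j)) :
    T.card ≤ 5 ^ Module.finrank ℝ E := by
  classical
  set φ : ι → E := fun i => s⁻¹ • (w i - y)
  have norm_φ (i) : ‖φ i‖ = s⁻¹ * dist (w i) y := by
    rw [norm_smul, Real.norm_of_nonneg (inv_pos.2 hs).le, dist_eq_norm]
  have norm_sub_φ (i j) : ‖φ i - φ j‖ = s⁻¹ * dist (w i) (w j) := by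
    rw [← smul_sub, norm_smul, Real.norm_of_nonneg (inv_pos.2 hs).le, sub_sub_sub_cancel_right,
      dist_eq_norm]
  have one_le {i j} (hi : i ∈ T) (hj : j ∈ T) (hij : i ≠ j) : 1 ≤ ‖φ i - φ j‖ := by
    rw [norm_sub_φ, le_inv_mul_iff₀ hs, mul_one]
    exact hsep i hi j hj hij
  have injOn : InjOn φ T := fun i hi j hj hφ => by
    by_contra hij
    have := one_le hi hj hij
    rw [hφ, sub_self, norm_zero] at this
    exact one_pos.not_ge this
  rw [← Finset.card_image_of_injOn injOn]
  refine Besicovitch.card_le_of_separated _ (Finset.forall_mem_image.2 fun i hi => ?_)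
    (Finset.forall_mem_image.2 fun i hi => Finset.forall_mem_image.2 fun j hj hij =>
      one_le hi hj fun h => hij (congrArg φ h))
  rw [norm_φ, inv_mul_le_iff₀ hs, mul_comm]
  exact hw i hi

lemma card_le_of_pairwiseDisjoint_ball [FiniteDimensional ℝ E] {ι : Type*} {T : Finset ι}
    {c : ι → E} {r : ι → ℝ} (hT : (T : Set ι).PairwiseDisjoint fun i => ball (c i) (r i)) {y : E}
    {s : ℝ} (hs : 0 < s) (hsr : ∀ i ∈ T, s ≤ r i)
    (hmeet : ∀ i ∈ T, (ball y s ∩ ball (c i) (r i)).Nonempty) :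
    T.card ≤ 5 ^ Module.finrank ℝ E := by
  have exists_center (i) (hi : i ∈ T) : ∃ w, dist w y ≤ 2 * s ∧ ball w s ⊆ ball (c i) (r i) := by
    obtain ⟨z, hzy, hzi⟩ := hmeet i hi
    obtain ⟨w, hwz, hw⟩ := exists_ball_subset_ball_of_mem hzi hs.le (hsr i hi)
    exact ⟨w, by linarith [dist_triangle w z y, mem_ball.1 hzy], hw⟩
  choose! w hwy hw using exists_center
  refine card_le_of_separated_of_dist_le hs hwy fun i hi j hj hij => ?_
  by_contra! hlt
  exact disjoint_left.1 (hT hi hj hij) (hw i hi (mem_ball'.2 hlt)) (hw j hj (mem_ball_self hs))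

variable [FiniteDimensional ℝ E] [MeasurableSpace E] [BorelSpace E]

lemma addHaar_ball_inter_ball_le (μ : Measure E) [μ.IsAddHaarMeasure] {β : ℝ} (hβ : 0 < β)
    (hβE : β ≤ Module.finrank ℝ E) (x y : E) {r s : ℝ} (hr : 0 < r) (hs : 0 < s) :
    μ (ball y s ∩ ball x r) ≤ μ (ball x r) * ENNReal.ofReal ((s / r) ^ β) := by
  rcases le_or_gt r s with hrs | hsr
  · calc μ (ball y s ∩ ball x r) ≤ μ (ball x r) * 1 := by
          rw [mul_one]
          exact measure_mono inter_subset_right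
      _ ≤ μ (ball x r) * ENNReal.ofReal ((s / r) ^ β) := by
          gcongr
          exact ENNReal.one_le_ofReal.2 (Real.one_le_rpow ((one_le_div hr).2 hrs) hβ.le)
  have hsr_pos : 0 < s / r := div_pos hs hr
  calc μ (ball y s ∩ ball x r) ≤ μ (ball y (r * (s / r))) := by
        rw [mul_div_cancel₀ s hr.ne']
        exact measure_mono inter_subset_left
    _ = μ (ball x r) * ENNReal.ofReal ((s / r) ^ (Module.finrank ℝ E : ℝ)) := by
        rw [Measure.addHaar_ball_of_pos μ y (by positivity), Measure.addHaar_ball_of_pos μ x hr,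
          mul_pow, ENNReal.ofReal_mul (by positivity), Real.rpow_natCast]
        ring
    _ ≤ μ (ball x r) * ENNReal.ofReal ((s / r) ^ β) := by
        refine mul_le_mul_right (ENNReal.ofReal_le_ofReal ?_) _
        exact Real.rpow_le_rpow_of_exponent_ge hsr_pos ((div_le_one hr).2 hsr.le) hβE

end NormedSpace

section PackingContent

variable {n : ℕ} {β : ℝ} {ι : Type*} {c : ι → Rn n} {r : ι → ℝ}

lemma hContent_biUnion_closedBall_le_of_isPacking (hβ : 0 < β) {I : Set ι}
    (hr : ∀ i ∈ I, 0 < r i) {K : ℝ≥0∞}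
    (hK : ∀ T : Finset ι, ↑T ⊆ I → (T : Set ι).PairwiseDisjoint (fun i => closedBall (c i) (r i)) →
      IsPacking β c r T → ∑ i ∈ T, ENNReal.ofReal (r i ^ β) ≤ K) :
    hContent n β (⋃ i ∈ I, closedBall (c i) (r i)) ≤ ENNReal.ofReal (31 ^ β) * (omegaC β * K) := by
  rcases eq_or_ne K ∞ with rfl | hK_top
  · rw [ENNReal.mul_top (omegaC_ne_zero hβ), ENNReal.mul_top (by positivity)]
    exact le_top
  obtain ⟨v, y, s, hs, hcover, hsum⟩ := exists_cover_tsum_rpow_le_of_isPacking hβ hr hK_top hK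
  have weight_ne_zero (j : v) : ENNReal.ofReal (s j ^ β) ≠ 0 :=
    (ENNReal.ofReal_pos.2 (Real.rpow_pos_of_pos (hs j j.2) β)).ne'
  have : Countable v := by
    refine countable_univ_iff.1 ((Summable.countable_support_ennreal
      (ne_top_of_le_ne_top hK_top hsum)).mono fun j _ => weight_ne_zero j)
  calc hContent n β (⋃ i ∈ I, closedBall (c i) (r i))
      ≤ ∑' j : v, omegaC β * ENNReal.ofReal ((31 * s j) ^ β) := by
        refine hContent_le_tsum hβ (fun j : v => y j) _ (hcover.trans ?_)
        rw [biUnion_eq_iUnion]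
        exact iUnion_mono fun j => closedBall_subset_ball (by linarith [hs j j.2])
    _ = ENNReal.ofReal (31 ^ β) * (omegaC β * ∑' j : v, ENNReal.ofReal (s j ^ β)) := by
        rw [← ENNReal.tsum_mul_left, ← ENNReal.tsum_mul_left]
        refine tsum_congr fun j => ?_
        rw [Real.mul_rpow (by norm_num) (hs j j.2).le, ENNReal.ofReal_mul (by positivity)]
        ring
    _ ≤ ENNReal.ofReal (31 ^ β) * (omegaC β * K) := by gcongr

/-- The constant in the superadditivity of `hContent n β` along disjoint packings of balls. Of the
balls meeting a ball `B(y, s)`, those of radius at most `s` contribute the first term, the packing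
condition being applied to `B(y, 2 s)`; the second term bounds the number of larger ones. -/
def packingConst (n : ℕ) (β : ℝ) : ℝ≥0∞ := 2 * ENNReal.ofReal (2 ^ β) + 5 ^ n

lemma packingConst_ne_zero : packingConst n β ≠ 0 := by
  simp [packingConst]

lemma packingConst_ne_top : packingConst n β ≠ ∞ := by
  simp [packingConst, ENNReal.mul_eq_top]

lemma IsPacking.sum_hContent_ball_le (hβ : 0 < β) {T : Finset ι} (hT : IsPacking β c r T)
    {y : Rn n} {s : ℝ} (hs : 0 < s) (hrs : ∀ i ∈ T, r i ≤ s)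
    (hmeet : ∀ i ∈ T, (ball y s ∩ ball (c i) (r i)).Nonempty) :
    ∑ i ∈ T, hContent n β (ball (c i) (r i)) ≤
      2 * ENNReal.ofReal (2 ^ β) * (omegaC β * ENNReal.ofReal (s ^ β)) := by
  have dist_le (i) (hi : i ∈ T) : dist (c i) y ≤ 2 * s := by
    obtain ⟨z, hzy, hzi⟩ := hmeet i hi
    linarith [dist_triangle_left (c i) y z, mem_ball.1 hzy, mem_ball.1 hzi, hrs i hi]
  calc ∑ i ∈ T, hContent n β (ball (c i) (r i))
      ≤ ∑ i ∈ T, omegaC β * ENNReal.ofReal (r i ^ β) :=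
        Finset.sum_le_sum fun i _ => hContent_ball_le hβ _ _
    _ = omegaC β * ∑ i ∈ T, ENNReal.ofReal (r i ^ β) := (Finset.mul_sum ..).symm
    _ ≤ omegaC β * (2 * ENNReal.ofReal ((2 * s) ^ β)) := by
        gcongr
        exact hT T Subset.rfl y (2 * s) (by positivity) fun i hi =>
          ⟨dist_le i hi, by linarith [hrs i hi]⟩
    _ = 2 * ENNReal.ofReal (2 ^ β) * (omegaC β * ENNReal.ofReal (s ^ β)) := by
        rw [Real.mul_rpow zero_le_two hs.le, ENNReal.ofReal_mul (by positivity)]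
        ring

lemma sum_hContent_ball_inter_ball_le_of_le_radius (hβ : 0 < β) {T : Finset ι}
    (hdisj : (T : Set ι).PairwiseDisjoint fun i => ball (c i) (r i)) {y : Rn n} {s : ℝ}
    (hs : 0 < s) (hsr : ∀ i ∈ T, s ≤ r i)
    (hmeet : ∀ i ∈ T, (ball y s ∩ ball (c i) (r i)).Nonempty) :
    ∑ i ∈ T, hContent n β (ball y s ∩ ball (c i) (r i)) ≤
      5 ^ n * (omegaC β * ENNReal.ofReal (s ^ β)) := by
  have card_le := card_le_of_pairwiseDisjoint_ball hdisj hs hsr hmeet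
  rw [finrank_euclideanSpace_fin] at card_le
  calc ∑ i ∈ T, hContent n β (ball y s ∩ ball (c i) (r i))
      ≤ ∑ _i ∈ T, omegaC β * ENNReal.ofReal (s ^ β) := Finset.sum_le_sum fun i _ =>
        (monotone_hContent inter_subset_left).trans (hContent_ball_le hβ _ _)
    _ = T.card * (omegaC β * ENNReal.ofReal (s ^ β)) := by rw [Finset.sum_const, nsmul_eq_mul]
    _ ≤ 5 ^ n * (omegaC β * ENNReal.ofReal (s ^ β)) := by
        gcongr
        exact_mod_cast card_le

lemma IsPacking.sum_hContent_ball_inter_ball_le (hβ : 0 < β) {T : Finset ι}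
    (hT : IsPacking β c r T) (hdisj : (T : Set ι).PairwiseDisjoint fun i => ball (c i) (r i))
    (y : Rn n) (s : ℝ) :
    ∑ i ∈ T, hContent n β (ball y s ∩ ball (c i) (r i)) ≤
      packingConst n β * (omegaC β * ENNReal.ofReal (s ^ β)) := by
  classical
  rcases le_or_gt s 0 with hs | hs
  · simp only [ball_eq_empty.2 hs, empty_inter, hContent_empty hβ, Finset.sum_const_zero, zero_le]
  set M : Finset ι := {i ∈ T | (ball y s ∩ ball (c i) (r i)).Nonempty}
  have mem_T {i} (hi : i ∈ M) : i ∈ T := (Finset.mem_filter.1 hi).1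
  have sum_eq : ∑ i ∈ T, hContent n β (ball y s ∩ ball (c i) (r i)) =
      ∑ i ∈ M, hContent n β (ball y s ∩ ball (c i) (r i)) := by
    refine (Finset.sum_filter_of_ne fun i _ hi => ?_).symm
    contrapose! hi
    rw [hi, hContent_empty hβ]
  rw [sum_eq, ← Finset.sum_filter_add_sum_filter_not M fun i => r i ≤ s, packingConst, add_mul]
  refine add_le_add ?_ ?_
  · have small : IsPacking β c r ({i ∈ M | r i ≤ s} : Finset ι) :=
      hT.mono fun i hi => mem_T (Finset.mem_filter.1 hi).1
    refine (Finset.sum_le_sum fun i _ => monotone_hContent inter_subset_right).trans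
      (small.sum_hContent_ball_le hβ hs (y := y) ?_ ?_)
    · exact fun i hi => (Finset.mem_filter.1 hi).2
    · exact fun i hi => (Finset.mem_filter.1 (Finset.mem_filter.1 hi).1).2
  · refine sum_hContent_ball_inter_ball_le_of_le_radius hβ
      (hdisj.subset fun i hi => mem_T (Finset.mem_filter.1 hi).1) hs ?_ ?_
    · exact fun i hi => (not_le.1 (Finset.mem_filter.1 hi).2).le
    · exact fun i hi => (Finset.mem_filter.1 (Finset.mem_filter.1 hi).1).2

lemma IsPacking.sum_hContent_inter_ball_le (hβ : 0 < β) {T : Finset ι} (hT : IsPacking β c r T)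
    (hdisj : (T : Set ι).PairwiseDisjoint fun i => ball (c i) (r i)) (E : Set (Rn n)) :
    ∑ i ∈ T, hContent n β (E ∩ ball (c i) (r i)) ≤ packingConst n β * hContent n β E := by
  conv_rhs => simp only [hContent, ENNReal.mul_iInf_of_ne packingConst_ne_zero packingConst_ne_top]
  refine le_iInf₂ fun b hb => ?_
  calc ∑ i ∈ T, hContent n β (E ∩ ball (c i) (r i))
      ≤ ∑ i ∈ T, ∑' k, hContent n β (ball (b k).1 (b k).2 ∩ ball (c i) (r i)) := by
        refine Finset.sum_le_sum fun i _ => ?_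
        refine (monotone_hContent ?_).trans (hContent_iUnion_le hβ _)
        rw [← iUnion_inter]
        exact inter_subset_inter_left _ hb
    _ = ∑' k, ∑ i ∈ T, hContent n β (ball (b k).1 (b k).2 ∩ ball (c i) (r i)) :=
        (Summable.tsum_finsetSum fun _ _ => ENNReal.summable).symm
    _ ≤ ∑' k, packingConst n β * (omegaC β * ENNReal.ofReal ((b k).2 ^ β)) :=
        ENNReal.tsum_le_tsum fun k => hT.sum_hContent_ball_inter_ball_le hβ hdisj _ _
    _ = packingConst n β * ∑' k, omegaC β * ENNReal.ofReal ((b k).2 ^ β) := ENNReal.tsum_mul_left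

lemma IsPacking.sum_choquetOn_ball_le (hβ : 0 < β) {T : Finset ι} (hT : IsPacking β c r T)
    (hdisj : (T : Set ι).PairwiseDisjoint fun i => ball (c i) (r i)) (g : Rn n → ℝ≥0∞) :
    ∑ i ∈ T, choquetOn (hContent n β) (ball (c i) (r i)) g ≤
      packingConst n β * choquet (hContent n β) g := by
  simp only [choquetOn, choquet]
  rw [← lintegral_finsetSum _ fun i _ => measurable_apply_superlevel monotone_hContent _ g,
    ← lintegral_const_mul' _ _ packingConst_ne_top]
  refine lintegral_mono fun t => ?_
  refine le_trans (Finset.sum_le_sum fun i _ => monotone_hContent fun x hx => ?_)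
    (hT.sum_hContent_inter_ball_le hβ hdisj {x | ENNReal.ofReal t < g x})
  exact ⟨hx.2, hx.1⟩

end PackingContent

section MaximalFunction

variable {n : ℕ} {β : ℝ}

/-- The Choquet average `(1/(ω_β r^β)) ∫_{B(x,r)} g dH^β_∞`; its supremum over `r > 0` is
`maximalH n β g x`. -/
def hContentAverage (n : ℕ) (β : ℝ) (g : Rn n → ℝ≥0∞) (x : Rn n) (r : ℝ) : ℝ≥0∞ :=
  (omegaC β * ENNReal.ofReal (r ^ β))⁻¹ * choquetOn (hContent n β) (ball x r) g

lemma hContentAverage_le_maximalH (g : Rn n → ℝ≥0∞) (x : Rn n) {r : ℝ} (hr : 0 < r) :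
    hContentAverage n β g x r ≤ maximalH n β g x :=
  le_iSup₂ (f := fun r (_ : 0 < r) => hContentAverage n β g x r) r hr

lemma exists_mul_lt_choquetOn_of_lt_maximalH {g : Rn n → ℝ≥0∞} {x : Rn n} {l : ℝ≥0∞}
    (h : l < maximalH n β g x) : ∃ r : ℝ, 0 < r ∧
      l * (omegaC β * ENNReal.ofReal (r ^ β)) < choquetOn (hContent n β) (ball x r) g := by
  simp only [maximalH, lt_iSup_iff] at h
  obtain ⟨r, hr, hlt⟩ := h
  rw [mul_comm, ← div_eq_mul_inv] at hlt
  exact ⟨r, hr, ENNReal.mul_lt_of_lt_div hlt⟩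

theorem mul_hContent_maximalH_gt_le (hβ : 0 < β) (g : Rn n → ℝ≥0∞) (l : ℝ≥0∞) :
    l * hContent n β {x | l < maximalH n β g x} ≤
      ENNReal.ofReal (31 ^ β) * (packingConst n β * choquet (hContent n β) g) := by
  rcases eq_or_ne l 0 with rfl | hl_zero
  · simp only [zero_mul, zero_le]
  rcases eq_or_ne l ∞ with rfl | hl_top
  · simp only [not_top_lt, ofPred_false, hContent_empty hβ, mul_zero, zero_le]
  have exists_radius (x) (hx : l < maximalH n β g x) := exists_mul_lt_choquetOn_of_lt_maximalH hx
  choose! r hr hlr using exists_radius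
  have hlω_zero : l * omegaC β ≠ 0 := mul_ne_zero hl_zero (omegaC_ne_zero hβ)
  have hlω_top : l * omegaC β ≠ ∞ := ENNReal.mul_ne_top hl_top omegaC_ne_top
  set K : ℝ≥0∞ := packingConst n β * choquet (hContent n β) g / (l * omegaC β)
  have packing_bound (T : Finset (Rn n)) (hTsub : ↑T ⊆ {x | l < maximalH n β g x})
      (hdisj : (T : Set (Rn n)).PairwiseDisjoint fun x => closedBall x (r x))
      (hT : IsPacking β (fun x => x) r T) : ∑ x ∈ T, ENNReal.ofReal (r x ^ β) ≤ K := by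
    rw [ENNReal.le_div_iff_mul_le (.inl hlω_zero) (.inl hlω_top), mul_comm, Finset.mul_sum]
    calc ∑ x ∈ T, l * omegaC β * ENNReal.ofReal (r x ^ β)
        ≤ ∑ x ∈ T, choquetOn (hContent n β) (ball x (r x)) g :=
          Finset.sum_le_sum fun x hx => (mul_assoc ..).trans_le (hlr x (hTsub hx)).le
      _ ≤ packingConst n β * choquet (hContent n β) g :=
          hT.sum_choquetOn_ball_le hβ (hdisj.mono fun _ => ball_subset_closedBall) g
  calc l * hContent n β {x | l < maximalH n β g x}
      ≤ l * (ENNReal.ofReal (31 ^ β) * (omegaC β * K)) := by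
        gcongr
        refine (monotone_hContent fun x hx => ?_).trans
          (hContent_biUnion_closedBall_le_of_isPacking hβ hr packing_bound)
        exact mem_biUnion hx (mem_closedBall_self (hr x hx).le)
    _ = ENNReal.ofReal (31 ^ β) * (l * omegaC β * K) := by ring
    _ = ENNReal.ofReal (31 ^ β) * (packingConst n β * choquet (hContent n β) g) := by
        rw [ENNReal.mul_div_cancel hlω_zero hlω_top]

end MaximalFunction

section LebesguePoints

variable {n : ℕ} {β p : ℝ}

lemma hContentAverage_mono {g h : Rn n → ℝ≥0∞} (hgh : g ≤ h) (x : Rn n) (r : ℝ) :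
    hContentAverage n β g x r ≤ hContentAverage n β h x r :=
  mul_le_mul_right (choquetOn_mono monotone_hContent Subset.rfl fun y _ => hgh y) _

lemma maximalH_mono {g h : Rn n → ℝ≥0∞} (hgh : g ≤ h) (x : Rn n) :
    maximalH n β g x ≤ maximalH n β h x :=
  iSup₂_mono fun r _ => hContentAverage_mono hgh x r

lemma hContentAverage_sup_le (hβ : 0 < β) (g h : Rn n → ℝ≥0∞) (x : Rn n) (r : ℝ) :
    hContentAverage n β (g ⊔ h) x r ≤ hContentAverage n β g x r + hContentAverage n β h x r := by
  simp only [hContentAverage, ← mul_add]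
  gcongr
  exact choquetOn_sup_le monotone_hContent (hContent_union_le hβ) _ g h

lemma hContentAverage_le_of_forall_le (hβ : 0 < β) {g : Rn n → ℝ≥0∞} {x : Rn n} {r : ℝ}
    {M : ℝ≥0∞} (hg : ∀ y ∈ ball x r, g y ≤ M) : hContentAverage n β g x r ≤ M := by
  rw [hContentAverage, mul_comm, ← div_eq_mul_inv]
  refine ENNReal.div_le_of_le_mul ?_
  calc choquetOn (hContent n β) (ball x r) g ≤ M * hContent n β (ball x r) :=
        choquetOn_le_mul monotone_hContent (hContent_empty hβ) hg
    _ ≤ M * (omegaC β * ENNReal.ofReal (r ^ β)) := by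
        gcongr
        exact hContent_ball_le hβ x r

lemma tendsto_hContentAverage_zero (hβ : 0 < β) {g : Rn n → ℝ≥0∞} {x : Rn n}
    (hg : Tendsto g (𝓝 x) (𝓝 0)) : Tendsto (hContentAverage n β g x) (𝓝[>] 0) (𝓝 0) := by
  refine ENNReal.tendsto_nhds_zero.2 fun ε hε => ?_
  obtain ⟨R, hR, hgR⟩ := Metric.eventually_nhds_iff_ball.1 (ENNReal.tendsto_nhds_zero.1 hg ε hε)
  filter_upwards [Ioo_mem_nhdsGT hR] with r hr
  exact hContentAverage_le_of_forall_le hβ fun y hy => hgR y (ball_subset_ball hr.2.le hy)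

lemma limsup_hContentAverage_le_maximalH_indicator (hβ : 0 < β) {g : Rn n → ℝ≥0∞} {x : Rn n}
    {U : Set (Rn n)} (hg : Tendsto g (𝓝[Uᶜ] x) (𝓝 0)) :
    limsup (hContentAverage n β g x) (𝓝[>] 0) ≤ maximalH n β (U.indicator g) x := by
  have indicator_compl_tendsto : Tendsto (Uᶜ.indicator g) (𝓝 x) (𝓝 0) := by
    refine ENNReal.tendsto_nhds_zero.2 fun ε hε => ?_
    filter_upwards [eventually_nhdsWithin_iff.1 (ENNReal.tendsto_nhds_zero.1 hg ε hε)] with y hy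
    exact indicator_apply_le' hy fun _ => zero_le
  have le_sup : g ≤ U.indicator g ⊔ Uᶜ.indicator g := fun y => by
    by_cases hy : y ∈ U <;> simp [hy]
  have add_tendsto := (tendsto_hContentAverage_zero hβ indicator_compl_tendsto).const_add
    (maximalH n β (U.indicator g) x)
  rw [add_zero] at add_tendsto
  rw [← add_tendsto.limsup_eq]
  refine limsup_le_limsup ?_
  filter_upwards [self_mem_nhdsWithin] with r hr
  calc hContentAverage n β g x r
      ≤ hContentAverage n β (U.indicator g ⊔ Uᶜ.indicator g) x r := hContentAverage_mono le_sup x r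
    _ ≤ hContentAverage n β (U.indicator g) x r + hContentAverage n β (Uᶜ.indicator g) x r :=
        hContentAverage_sup_le hβ _ _ x r
    _ ≤ maximalH n β (U.indicator g) x + hContentAverage n β (Uᶜ.indicator g) x r := by
        gcongr
        exact hContentAverage_le_maximalH _ x hr

lemma enorm_sub_rpow_le {E : Type*} [SeminormedAddCommGroup E] (hp : 0 ≤ p) (a b : E) :
    ‖a - b‖ₑ ^ p ≤ ENNReal.ofReal (2 ^ p) * (‖a‖ₑ ^ p ⊔ ‖b‖ₑ ^ p) := by
  calc ‖a - b‖ₑ ^ p ≤ (2 * (‖a‖ₑ ⊔ ‖b‖ₑ)) ^ p := by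
        gcongr
        refine enorm_sub_le.trans ?_
        rw [two_mul]
        exact add_le_add le_sup_left le_sup_right
    _ = ENNReal.ofReal (2 ^ p) * (‖a‖ₑ ^ p ⊔ ‖b‖ₑ ^ p) := by
        rw [ENNReal.mul_rpow_of_nonneg _ _ hp, (ENNReal.monotone_rpow_of_nonneg hp).map_sup,
          ← ENNReal.ofReal_rpow_of_pos two_pos, ENNReal.ofReal_ofNat]

/-- The limiting oscillation of `f` at `x`, as the upper limit for `r → 0` of the Choquet averages
of `|f - f x|^p` over `B(x, r)`. -/
def choquetOscillation (n : ℕ) (β p : ℝ) (f : Rn n → ℝ) (x : Rn n) : ℝ≥0∞ :=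
  limsup (hContentAverage n β (fun y => ‖f y - f x‖ₑ ^ p) x) (𝓝[>] 0)

lemma choquetOscillation_le_maximalH (hβ : 0 < β) (hp : 0 < p) {f : Rn n → ℝ} {U : Set (Rn n)}
    (hf : ContinuousOn f Uᶜ) {x : Rn n} (hx : x ∉ U) :
    choquetOscillation n β p f x ≤
      maximalH n β (U.indicator fun y => ‖f y - f x‖ₑ ^ p) x := by
  refine limsup_hContentAverage_le_maximalH_indicator hβ ?_
  have sub_tendsto : Tendsto (fun y => f y - f x) (𝓝[Uᶜ] x) (𝓝 0) := by
    simpa only [sub_self] using (hf x hx).tendsto.sub_const (f x)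
  simpa only [enorm_zero, ENNReal.zero_rpow_of_pos hp] using
    (sub_tendsto.enorm).ennrpow_const p

lemma choquetOn_rpow_enorm_sup_const_le (hβ : 0 < β) (f : Rn n → ℝ) (U : Set (Rn n)) (m : ℝ≥0∞) :
    choquetOn (hContent n β) U (fun y => ENNReal.ofReal (2 ^ p) * (‖f y‖ₑ ^ p ⊔ m ^ p)) ≤
      ENNReal.ofReal (2 ^ p) * (choquetOn (hContent n β) U (fun y => ‖f y‖ₑ ^ p) +
        m ^ p * hContent n β U) := by
  rw [choquetOn_const_mul _ _ (by positivity)]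
  gcongr
  calc choquetOn (hContent n β) U (fun y => ‖f y‖ₑ ^ p ⊔ m ^ p)
      ≤ choquetOn (hContent n β) U (fun y => ‖f y‖ₑ ^ p) +
          choquetOn (hContent n β) U (fun _ => m ^ p) :=
        choquetOn_sup_le monotone_hContent (hContent_union_le hβ) _ _ _
    _ ≤ choquetOn (hContent n β) U (fun y => ‖f y‖ₑ ^ p) + m ^ p * hContent n β U := by
        gcongr
        exact choquetOn_le_mul monotone_hContent (hContent_empty hβ) fun _ _ => le_rfl

lemma mul_hContent_choquetOscillation_gt_le (hβ : 0 < β) (hp : 0 < p) {f : Rn n → ℝ}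
    {U : Set (Rn n)} (hf : ContinuousOn f Uᶜ) (m δ : ℝ≥0∞) :
    δ * hContent n β {x | ‖f x‖ₑ ≤ m ∧ δ < choquetOscillation n β p f x} ≤
      δ * hContent n β U + ENNReal.ofReal (31 ^ β) * (packingConst n β * (ENNReal.ofReal (2 ^ p) *
        (choquetOn (hContent n β) U (fun y => ‖f y‖ₑ ^ p) + m ^ p * hContent n β U))) := by
  let h : Rn n → ℝ≥0∞ := fun y => ENNReal.ofReal (2 ^ p) * (‖f y‖ₑ ^ p ⊔ m ^ p)
  have subset_union : {x | ‖f x‖ₑ ≤ m ∧ δ < choquetOscillation n β p f x} ⊆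
      U ∪ {x | δ < maximalH n β (U.indicator h) x} := by
    intro x ⟨hxm, hδ⟩
    have rpow_le (y) : ‖f y - f x‖ₑ ^ p ≤ h y := (enorm_sub_rpow_le hp.le _ _).trans <|
      mul_le_mul_right (sup_le_sup_left (ENNReal.rpow_le_rpow hxm hp.le) _) _
    by_cases hxU : x ∈ U
    · exact .inl hxU
    · exact .inr (hδ.trans_le ((choquetOscillation_le_maximalH hβ hp hf hxU).trans
        (maximalH_mono (indicator_mono rpow_le) x)))
  calc δ * hContent n β {x | ‖f x‖ₑ ≤ m ∧ δ < choquetOscillation n β p f x}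
      ≤ δ * (hContent n β U + hContent n β {x | δ < maximalH n β (U.indicator h) x}) := by
        gcongr
        exact (monotone_hContent subset_union).trans (hContent_union_le hβ _ _)
    _ ≤ δ * hContent n β U +
          ENNReal.ofReal (31 ^ β) * (packingConst n β * choquetOn (hContent n β) U h) := by
        rw [mul_add, ← choquet_indicator]
        exact add_le_add_right (mul_hContent_maximalH_gt_le hβ _ δ) _
    _ ≤ δ * hContent n β U + ENNReal.ofReal (31 ^ β) * (packingConst n β *
          (ENNReal.ofReal (2 ^ p) * (choquetOn (hContent n β) U (fun y => ‖f y‖ₑ ^ p) +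
            m ^ p * hContent n β U))) := by
        gcongr
        exact choquetOn_rpow_enorm_sup_const_le hβ f U m

lemma hContent_choquetOscillation_gt_eq_zero (hβ : 0 < β) (hp : 0 < p) {f : Rn n → ℝ}
    (hf : QuasiCont (hContent n β) f)
    (hfp : choquet (hContent n β) (fun y => ‖f y‖ₑ ^ p) ≠ ∞) {m δ : ℝ≥0∞} (hm : m ≠ ∞)
    (hδ_zero : δ ≠ 0) (hδ_top : δ ≠ ∞) :
    hContent n β {x | ‖f x‖ₑ ≤ m ∧ δ < choquetOscillation n β p f x} = 0 := by
  obtain ⟨U, -, hfU, hU⟩ := hf.exists_seq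
  have hmp : m ^ p ≠ ∞ := ENNReal.rpow_ne_top_of_nonneg hp.le hm
  have bound_tendsto : Tendsto (fun k => δ * hContent n β (U k) +
      ENNReal.ofReal (31 ^ β) * (packingConst n β * (ENNReal.ofReal (2 ^ p) *
        (choquetOn (hContent n β) (U k) (fun y => ‖f y‖ₑ ^ p) + m ^ p * hContent n β (U k)))))
      atTop (𝓝 0) := by
    have integral_tendsto := tendsto_choquetOn_zero monotone_hContent hfp hU
    have const_mul {a : ℝ≥0∞} (ha : a ≠ ∞) {u : ℕ → ℝ≥0∞} (hu : Tendsto u atTop (𝓝 0)) :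
        Tendsto (fun k => a * u k) atTop (𝓝 0) := by
      simpa only [mul_zero] using ENNReal.Tendsto.const_mul hu (.inr ha)
    simpa only [add_zero] using (const_mul hδ_top hU).add (const_mul ENNReal.ofReal_ne_top
      (const_mul packingConst_ne_top (const_mul ENNReal.ofReal_ne_top
        (by simpa only [add_zero] using integral_tendsto.add (const_mul hmp hU)))))
  have mul_content_eq_zero :
      δ * hContent n β {x | ‖f x‖ₑ ≤ m ∧ δ < choquetOscillation n β p f x} = 0 :=
    le_antisymm (ge_of_tendsto' bound_tendsto fun k =>
      mul_hContent_choquetOscillation_gt_le hβ hp (hfU k) m δ) zero_le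
  exact (mul_eq_zero.1 mul_content_eq_zero).resolve_left hδ_zero

lemma hContent_choquetOscillation_ne_zero (hβ : 0 < β) (hp : 0 < p) {f : Rn n → ℝ}
    (hf : QuasiCont (hContent n β) f)
    (hfp : choquet (hContent n β) (fun y => ‖f y‖ₑ ^ p) ≠ ∞) :
    hContent n β {x | choquetOscillation n β p f x ≠ 0} = 0 := by
  have subset_iUnion : {x | choquetOscillation n β p f x ≠ 0} ⊆
      ⋃ k : ℕ, {x | ‖f x‖ₑ ≤ k ∧ ((k : ℝ≥0∞) + 1)⁻¹ < choquetOscillation n β p f x} := by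
    intro x hx
    obtain ⟨i, hi⟩ := ENNReal.exists_nat_gt (enorm_ne_top (x := f x))
    obtain ⟨j, hj⟩ := ENNReal.exists_inv_nat_lt hx
    refine mem_iUnion.2 ⟨max i j, hi.le.trans (by gcongr; exact le_max_left i j),
      hj.trans_le' (ENNReal.inv_le_inv.2 (le_add_right ?_))⟩
    gcongr
    exact le_max_right i j
  refine le_antisymm ((monotone_hContent subset_iUnion).trans ((hContent_iUnion_le hβ _).trans_eq
    (ENNReal.tsum_eq_zero.2 fun k => ?_))) zero_le
  exact hContent_choquetOscillation_gt_eq_zero hβ hp hf hfp (ENNReal.natCast_ne_top k)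
    (by simp) (by simp)

end LebesguePoints

section Volume

variable {n : ℕ} {β : ℝ}

lemma volume_inter_ball_le (hβ : 0 < β) (hβn : β ≤ n) (E : Set (Rn n)) (x : Rn n) {r : ℝ}
    (hr : 0 < r) : volume (E ∩ ball x r) ≤
      volume (ball x r) * (omegaC β * ENNReal.ofReal (r ^ β))⁻¹ * hContent n β E := by
  have weight_ne_zero := omegaC_mul_rpow_ne_zero hβ hr
  have const_ne_zero : volume (ball x r) * (omegaC β * ENNReal.ofReal (r ^ β))⁻¹ ≠ 0 :=
    mul_ne_zero (measure_ball_pos _ _ hr).ne' (ENNReal.inv_ne_zero.2 omegaC_mul_rpow_ne_top)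
  have const_ne_top : volume (ball x r) * (omegaC β * ENNReal.ofReal (r ^ β))⁻¹ ≠ ∞ :=
    ENNReal.mul_ne_top measure_ball_lt_top.ne (ENNReal.inv_ne_top.2 weight_ne_zero)
  have volume_ball_inter_le (y : Rn n) (s : ℝ) : volume (ball y s ∩ ball x r) ≤
      volume (ball x r) * (omegaC β * ENNReal.ofReal (r ^ β))⁻¹ *
        (omegaC β * ENNReal.ofReal (s ^ β)) := by
    rcases le_or_gt s 0 with hs | hs
    · simp only [ball_eq_empty.2 hs, empty_inter, measure_empty, zero_le]
    refine (addHaar_ball_inter_ball_le volume hβ (by rwa [finrank_euclideanSpace_fin]) x y hr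
      hs).trans_eq ?_
    rw [Real.div_rpow hs.le hr.le, ENNReal.ofReal_div_of_pos (by positivity), mul_assoc,
      mul_comm _⁻¹, ← div_eq_mul_inv, ENNReal.mul_div_mul_left _ _ (omegaC_ne_zero hβ)
      omegaC_ne_top]
  conv_rhs => simp only [hContent, ENNReal.mul_iInf_of_ne const_ne_zero const_ne_top]
  refine le_iInf₂ fun c hc => ?_
  calc volume (E ∩ ball x r) ≤ volume (⋃ k, ball (c k).1 (c k).2 ∩ ball x r) := by
        rw [← iUnion_inter]
        exact measure_mono (inter_subset_inter_left _ hc)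
    _ ≤ ∑' k, volume (ball (c k).1 (c k).2 ∩ ball x r) := measure_iUnion_le _
    _ ≤ ∑' k, volume (ball x r) * (omegaC β * ENNReal.ofReal (r ^ β))⁻¹ *
          (omegaC β * ENNReal.ofReal ((c k).2 ^ β)) :=
        ENNReal.tsum_le_tsum fun k => volume_ball_inter_le _ _
    _ = _ := ENNReal.tsum_mul_left

lemma volume_eq_zero_of_hContent_eq_zero (hβ : 0 < β) (hβn : β ≤ n) {E : Set (Rn n)}
    (hE : hContent n β E = 0) : volume E = 0 := by
  refine measure_null_of_locally_null E fun x _ =>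
    ⟨E ∩ ball x 1, inter_mem_nhdsWithin E (ball_mem_nhds x one_pos), ?_⟩
  have := volume_inter_ball_le hβ hβn E x one_pos
  rwa [hE, mul_zero, nonpos_iff_eq_zero] at this

lemma setLAverage_le_hContentAverage (hβ : 0 < β) (hβn : β ≤ n) {g : Rn n → ℝ≥0∞}
    (hg : AEMeasurable g) (hg_top : ∀ x, g x ≠ ∞) (x : Rn n) {r : ℝ} (hr : 0 < r) :
    ⨍⁻ y in ball x r, g y ∂volume ≤ hContentAverage n β g x r := by
  rw [setLAverage_eq, ← choquet_measure_eq_lintegral _ hg.restrict hg_top]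
  refine ENNReal.div_le_of_le_mul ?_
  rw [hContentAverage, mul_comm, ← mul_assoc, choquet, choquetOn,
    ← lintegral_const_mul _ (measurable_apply_superlevel monotone_hContent _ g)]
  refine lintegral_mono fun t => ?_
  rw [Measure.restrict_apply' measurableSet_ball]
  refine (measure_mono ?_).trans (volume_inter_ball_le hβ hβn _ x hr)
  exact fun y hy => ⟨⟨hy.2, hy.1⟩, hy.2⟩

end Volume

section Jensen

variable {α E : Type*} {m : MeasurableSpace α} {μ : Measure α} [NormedAddCommGroup E] {f : α → E}

lemma lintegral_enorm_rpow_le [IsProbabilityMeasure μ] {p : ℝ} (hp : 1 ≤ p)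
    (hf : AEStronglyMeasurable f μ) : (∫⁻ x, ‖f x‖ₑ ∂μ) ^ p ≤ ∫⁻ x, ‖f x‖ₑ ^ p ∂μ := by
  have hp0 : 0 < p := one_pos.trans_le hp
  have := eLpNorm'_le_eLpNorm'_of_exponent_le one_pos hp μ hf
  simp only [eLpNorm', ENNReal.rpow_one, one_div, inv_one] at this
  rwa [ENNReal.le_rpow_inv_iff hp0] at this

variable [NormedSpace ℝ E] [CompleteSpace E]

lemma enorm_integral_sub_le [IsProbabilityMeasure μ] (hf : AEStronglyMeasurable f μ) (a : E) :
    ‖(∫ x, f x ∂μ) - a‖ₑ ≤ ∫⁻ x, ‖f x - a‖ₑ ∂μ := by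
  by_cases hint : Integrable (fun x => f x - a) μ
  · have hf_int : Integrable f μ := (integrable_add_const_iff (c := -a)).1
      (by simpa only [← sub_eq_add_neg] using hint)
    calc ‖(∫ x, f x ∂μ) - a‖ₑ = ‖∫ x, (f x - a) ∂μ‖ₑ := by
          rw [integral_sub hf_int (integrable_const a), integral_const, probReal_univ, one_smul]
      _ ≤ ∫⁻ x, ‖f x - a‖ₑ ∂μ := enorm_integral_le_lintegral_enorm _
  · have : ∫⁻ x, ‖f x - a‖ₑ ∂μ = ∞ := by
      contrapose! hint
      exact ⟨hf.sub aestronglyMeasurable_const, hint.lt_top⟩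
    exact this ▸ le_top

lemma enorm_average_sub_rpow_le [IsFiniteMeasure μ] [NeZero μ] {p : ℝ} (hp : 1 ≤ p)
    (hf : AEStronglyMeasurable f μ) (a : E) :
    ‖(⨍ x, f x ∂μ) - a‖ₑ ^ p ≤ ⨍⁻ x, ‖f x - a‖ₑ ^ p ∂μ := by
  have hf' : AEStronglyMeasurable f ((μ univ)⁻¹ • μ) := hf.smul_measure _
  calc ‖(⨍ x, f x ∂μ) - a‖ₑ ^ p ≤ (∫⁻ x, ‖f x - a‖ₑ ∂(μ univ)⁻¹ • μ) ^ p := by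
        gcongr
        exact enorm_integral_sub_le hf' a
    _ ≤ ⨍⁻ x, ‖f x - a‖ₑ ^ p ∂μ :=
        lintegral_enorm_rpow_le hp (hf'.sub aestronglyMeasurable_const)

end Jensen

lemma tendsto_setAverage_of_tendsto_hContentAverage {n : ℕ} {β p : ℝ} (hβ : 0 < β) (hβn : β ≤ n)
    (hp : 1 ≤ p) {f : Rn n → ℝ} (hf : AEStronglyMeasurable f) {x : Rn n} {a : ℝ}
    (h : Tendsto (hContentAverage n β (fun y => ‖f y - a‖ₑ ^ p) x) (𝓝[>] 0) (𝓝 0)) :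
    Tendsto (fun r => ⨍ y in ball x r, f y) (𝓝[>] 0) (𝓝 a) := by
  have hp0 : 0 < p := one_pos.trans_le hp
  have rpow_tendsto : Tendsto (fun r => ‖(⨍ y in ball x r, f y) - a‖ₑ ^ p) (𝓝[>] 0) (𝓝 0) := by
    refine tendsto_of_tendsto_of_tendsto_of_le_of_le' tendsto_const_nhds h
      (.of_forall fun _ => zero_le) ?_
    filter_upwards [self_mem_nhdsWithin] with r hr
    have : NeZero (volume.restrict (ball x r)) :=
      ⟨Measure.restrict_eq_zero.not.2 (measure_ball_pos _ _ hr).ne'⟩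
    have : IsFiniteMeasure (volume.restrict (ball x r)) :=
      isFiniteMeasure_restrict.2 measure_ball_lt_top.ne
    exact (enorm_average_sub_rpow_le hp hf.restrict a).trans (setLAverage_le_hContentAverage hβ hβn
      ((hf.sub aestronglyMeasurable_const).enorm.pow_const p)
      (fun y => ENNReal.rpow_ne_top_of_nonneg hp0.le enorm_ne_top) x hr)
  rw [tendsto_iff_edist_tendsto_0]
  simpa only [edist_eq_enorm_sub, ENNReal.rpow_rpow_inv hp0.ne',
    ENNReal.zero_rpow_of_pos (inv_pos.2 hp0)] using rpow_tendsto.ennrpow_const p⁻¹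

theorem statement18_general (n : ℕ) (β p : ℝ) (hβ0 : 0 < β) (hβn : β ≤ n) (hp : 1 ≤ p)
    (f : Rn n → ℝ) (hf : MemChoquetLp (hContent n β) p f) :
    ∃ S : Set (Rn n), hContent n β S = 0 ∧ ∀ x ∉ S,
      Tendsto (fun r : ℝ => ⨍ y in ball x r, f y) (𝓝[>] 0) (𝓝 (f x)) ∧
      Tendsto
        (fun r : ℝ => (omegaC β * ENNReal.ofReal (r ^ β))⁻¹ *
          choquetOn (hContent n β) (ball x r) (fun y => ENNReal.ofReal (|f y - f x| ^ p)))
        (𝓝[>] 0) (𝓝 0) := by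
  have hp0 : 0 < p := one_pos.trans_le hp
  obtain ⟨hquasi, hfp⟩ := hf
  simp only [← Real.enorm_eq_ofReal_abs] at hfp
  have hmeas : AEStronglyMeasurable f volume := hquasi.aestronglyMeasurable monotone_hContent
    fun E => volume_eq_zero_of_hContent_eq_zero hβ0 hβn
  refine ⟨{x | choquetOscillation n β p f x ≠ 0},
    hContent_choquetOscillation_ne_zero hβ0 hp0 hquasi hfp.ne, fun x hx => ?_⟩
  have average_tendsto : Tendsto (hContentAverage n β (fun y => ‖f y - f x‖ₑ ^ p) x)
      (𝓝[>] 0) (𝓝 0) :=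
    tendsto_of_le_liminf_of_limsup_le zero_le (not_not.1 hx).le
  refine ⟨tendsto_setAverage_of_tendsto_hContentAverage hβ0 hβn hp hmeas average_tendsto, ?_⟩
  simp only [← ENNReal.ofReal_rpow_of_nonneg (abs_nonneg _) hp0.le, ← Real.enorm_eq_ofReal_abs]
  exact average_tendsto

/-- Lebesgue differentiation theorem in `L^p(H^β_∞)`: for `H^β`-
almost every `x`, the precise representative `f*(x)` exists as the limit of the
volume averages, and the Choquet `p`-averages of `|f - f*(x)|` over `B(x,r)`,
normalized by `ω_β r^β`, tend to `0` as `r → 0`. -/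
theorem statement18 (n : ℕ) (β p : ℝ) (hβ0 : 0 < β) (hβn : β < n) (hp : 1 ≤ p)
    (f : Rn n → ℝ) (hf : MemChoquetLp (hContent n β) p f) :
    ∃ S : Set (Rn n), hContent n β S = 0 ∧ ∀ x ∉ S, ∃ L : ℝ,
      Filter.Tendsto (fun r : ℝ => ⨍ y in ball x r, f y) (nhdsWithin 0 (Ioi 0)) (nhds L) ∧
      Filter.Tendsto
        (fun r : ℝ => (omegaC β * ENNReal.ofReal (r ^ β))⁻¹ *
          choquetOn (hContent n β) (ball x r)
            (fun y => ENNReal.ofReal (|f y - L| ^ p)))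
        (nhdsWithin 0 (Ioi 0)) (nhds 0) := by
  obtain ⟨S, hS, hlim⟩ := statement18_general n β p hβ0 hβn.le hp f hf
  exact ⟨S, hS, fun x hx => ⟨f x, hlim x hx⟩⟩

end
end
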